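/- arXiv:1204.1938 — 2 statements merged into one kernel-verified Lean document; each statement's English description precedes it below -/
import Mathlib

section
/- Let N ≥ 2 and let F be a quadratic form in N variables over ℚ such that the quadratic space (ℚ^N, F) is regular (the Gram matrix (f_{ij}) is nonsingular). There exists a constant C depending only on N such that for every isometry σ ∈ O(ℚ^N, F), either σ is the identity, or there exist an integer 1 ≤ l ≤ 2N − 1 and reflections τ_1, …, τ_l ∈ O(ℚ^N, F) such that σ = τ_1 ∘ ⋯ ∘ τ_l and H(τ_i) ≤ C · (H(F)^{N/3} · H(σ))^{5^{N−1}} for each 1 ≤ i ≤ l. -/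
/-- Projective (homogeneous) height of a rational vector: the sup-norm of a primitive integer
vector proportional to it. -/
noncomputable def projHeight {ι : Type*} [Fintype ι] (x : ι → ℚ) : ℕ :=
  sInf {m : ℕ | ∃ y : ι → ℤ,
    (∃ c : ℚ, c ≠ 0 ∧ ∀ i, (y i : ℚ) = c * x i) ∧
    Finset.univ.gcd y = 1 ∧ m = Finset.univ.sup fun i => (y i).natAbs}

/-- Height of an `N×N` rational matrix, viewed as a vector in `ℚ^(N²)`. -/
noncomputable def matHeight {N : ℕ} (A : Matrix (Fin N) (Fin N) ℚ) : ℕ :=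
  projHeight fun p : Fin N × Fin N => A p.1 p.2

/-- `S` is an isometry of the quadratic space `(ℚ^N, F)`, where `F` has Gram matrix `f`. -/
def IsIsometry (N : ℕ) (f : Fin N → Fin N → ℚ) (S : Matrix (Fin N) (Fin N) ℚ) : Prop :=
  IsUnit S.det ∧ ∀ x y : Fin N → ℚ,
    ∑ i, ∑ j, f i j * S.mulVec x i * S.mulVec y j = ∑ i, ∑ j, f i j * x i * y j

/-- A reflection of `(ℚ^N, F)`: an isometry whose fixed-point set has dimension `N − 1`. -/
def IsReflection (N : ℕ) (f : Fin N → Fin N → ℚ) (τ : Matrix (Fin N) (Fin N) ℚ) : Prop :=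
  IsIsometry N f τ ∧
    Module.finrank ℚ
      (LinearMap.ker (τ.mulVecLin - (LinearMap.id : (Fin N → ℚ) →ₗ[ℚ] (Fin N → ℚ)))) = N - 1

def IB (b : ℕ) (q : ℚ) : Prop := ∃ n : ℤ, (n : ℚ) = q ∧ n.natAbs ≤ b

lemma IB.mono {b c : ℕ} {q : ℚ} (h : IB b q) (hbc : b ≤ c) : IB c q := by
  obtain ⟨n, h1, h2⟩ := h
  exact ⟨n, h1, h2.trans hbc⟩

lemma IB.add {b c : ℕ} {p q : ℚ} (h : IB b p) (h' : IB c q) : IB (b + c) (p + q) := by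
  obtain ⟨n, rfl, h2⟩ := h
  obtain ⟨m, rfl, h3⟩ := h'
  exact ⟨n + m, by push_cast; rfl, by omega⟩

lemma IB.sub {b c : ℕ} {p q : ℚ} (h : IB b p) (h' : IB c q) : IB (b + c) (p - q) := by
  obtain ⟨n, rfl, h2⟩ := h
  obtain ⟨m, rfl, h3⟩ := h'
  exact ⟨n - m, by push_cast; rfl, by omega⟩

lemma IB.mul {b c : ℕ} {p q : ℚ} (h : IB b p) (h' : IB c q) : IB (b * c) (p * q) := by
  obtain ⟨n, rfl, h2⟩ := h
  obtain ⟨m, rfl, h3⟩ := h'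
  exact ⟨n * m, by push_cast; rfl, by rw [Int.natAbs_mul]; exact Nat.mul_le_mul h2 h3⟩

lemma IB.zero (b : ℕ) : IB b 0 := ⟨0, by simp, by simp⟩
lemma IB.one : IB 1 1 := ⟨1, by simp, by simp⟩
lemma IB.two : IB 2 2 := ⟨2, by simp, by simp⟩

lemma IB.finset_sum {ι : Type*} (s : Finset ι) {b : ℕ} {g : ι → ℚ} (h : ∀ i, IB b (g i)) :
    IB (s.card * b) (∑ i ∈ s, g i) := by
  classical
  induction s using Finset.induction_on with
  | empty => simpa using IB.zero 0
  | insert a s ha ih =>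
    rw [Finset.sum_insert ha, Finset.card_insert_of_notMem ha]
    exact ((h a).add ih).mono (by ring_nf; omega)

lemma IB.sum {N b : ℕ} {g : Fin N → ℚ} (h : ∀ i, IB b (g i)) : IB (N * b) (∑ i, g i) := by
  simpa using IB.finset_sum Finset.univ h

lemma prim_exists {ι : Type*} [Fintype ι] (x : ι → ℚ) (hx : ∃ i, x i ≠ 0) (c : ℚ) (hc : c ≠ 0)
    (b : ℕ) (h : ∀ i, IB b (c * x i)) : ∃ m ≤ b, ∃ y : ι → ℤ,
    (∃ c : ℚ, c ≠ 0 ∧ ∀ i, (y i : ℚ) = c * x i) ∧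
    Finset.univ.gcd y = 1 ∧ m = Finset.univ.sup fun i => (y i).natAbs := by
  choose n hn hb using h
  obtain ⟨i0, hi0⟩ := hx
  have hni : n i0 ≠ 0 := by
    intro h0
    have := hn i0
    rw [h0] at this
    simp [hc, hi0] at this
  obtain ⟨y, hy, hg⟩ := Finset.extract_gcd n (Finset.univ_nonempty_iff.2 ⟨i0⟩ : (Finset.univ : Finset ι).Nonempty)
  set g := Finset.univ.gcd n with hgdef
  have hg0 : g ≠ 0 := by
    intro h0
    have := hy i0 (Finset.mem_univ _)
    rw [h0] at this
    simp at this
    exact hni this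
  refine ⟨_, ?_, y, ⟨c / g, div_ne_zero hc (by exact_mod_cast hg0), ?_⟩, hg, rfl⟩
  · refine Finset.sup_le fun i _ => le_trans ?_ (hb i)
    rw [hy i (Finset.mem_univ _), Int.natAbs_mul]
    exact Nat.le_mul_of_pos_left _ (Int.natAbs_pos.2 hg0)
  · intro i
    have h1 := hn i
    rw [hy i (Finset.mem_univ _)] at h1
    have : (g : ℚ) ≠ 0 := by exact_mod_cast hg0
    field_simp
    push_cast at h1
    linarith

lemma ht_le {ι : Type*} [Fintype ι] (x : ι → ℚ) (hx : ∃ i, x i ≠ 0) (c : ℚ) (hc : c ≠ 0)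
    (b : ℕ) (h : ∀ i, IB b (c * x i)) : projHeight x ≤ b := by
  obtain ⟨m, hm, h⟩ := prim_exists x hx c hc b h
  exact (Nat.sInf_le h).trans hm

lemma ht_spec {ι : Type*} [Fintype ι] (x : ι → ℚ) (hx : ∃ i, x i ≠ 0) :
    1 ≤ projHeight x ∧ ∃ c : ℚ, c ≠ 0 ∧ ∀ i, IB (projHeight x) (c * x i) := by
  classical
  have hne : {m : ℕ | ∃ y : ι → ℤ,
    (∃ c : ℚ, c ≠ 0 ∧ ∀ i, (y i : ℚ) = c * x i) ∧
    Finset.univ.gcd y = 1 ∧ m = Finset.univ.sup fun i => (y i).natAbs}.Nonempty := by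
    have key : ∀ i, ∃ n : ℤ, (n : ℚ) = (∏ j, ((x j).den : ℚ)) * x i := by
      intro i
      refine ⟨(∏ j ∈ Finset.univ.erase i, ((x j).den : ℤ)) * (x i).num, ?_⟩
      rw [← Finset.prod_erase_mul _ _ (Finset.mem_univ i), mul_assoc, Rat.den_mul_eq_num]
      push_cast
      rfl
    choose n hn using key
    obtain ⟨m, -, h⟩ := prim_exists x hx (∏ j, ((x j).den : ℚ))
      (Finset.prod_ne_zero_iff.2 fun i _ => by exact_mod_cast (x i).den_ne_zero)
      (Finset.univ.sup fun i => (n i).natAbs)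
      (fun i => ⟨n i, hn i, Finset.le_sup (f := fun i => (n i).natAbs) (Finset.mem_univ i)⟩)
    exact ⟨m, h⟩
  obtain ⟨y, ⟨c, hc, hy⟩, hg, hm⟩ := Nat.sInf_mem hne
  change projHeight x = _ at hm
  have hb : ∀ i, IB (projHeight x) (c * x i) := fun i =>
    ⟨y i, hy i, by rw [hm]; exact Finset.le_sup (f := fun i => (y i).natAbs) (Finset.mem_univ i)⟩
  refine ⟨?_, c, hc, hb⟩
  obtain ⟨i, hi⟩ := hx
  obtain ⟨n, hn, hnb⟩ := hb i
  have : n ≠ 0 := by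
    rintro rfl
    simp [hc, hi] at hn
  have := Int.natAbs_pos.2 this
  omega

/-- form -/
noncomputable abbrev bl {N : ℕ} (G : Matrix (Fin N) (Fin N) ℚ) : LinearMap.BilinForm ℚ (Fin N → ℚ) :=
  Matrix.toBilin' G

section
variable {N : ℕ} {G : Matrix (Fin N) (Fin N) ℚ}

lemma bl_dot (x y : Fin N → ℚ) : bl G x y = x ⬝ᵥ (G.mulVec y) := Matrix.toBilin'_apply' G x y

lemma bl_symm (hG : ∀ i j, G i j = G j i) (x y : Fin N → ℚ) : bl G x y = bl G y x := by
  simp only [Matrix.toBilin'_apply]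
  rw [Finset.sum_comm]
  refine Finset.sum_congr rfl fun i _ => Finset.sum_congr rfl fun j _ => ?_
  rw [hG i j]; ring

lemma bl_nondeg (hd : G.det ≠ 0) (x : Fin N → ℚ) (h : ∀ y, bl G y x = 0) : x = 0 := by
  have h1 : G.mulVec x = 0 := by
    funext i
    have := h (Pi.single i 1)
    rw [bl_dot] at this
    simpa using this
  exact Matrix.eq_zero_of_mulVec_eq_zero hd h1

/-- reflection matrix -/
noncomputable def rfm (G : Matrix (Fin N) (Fin N) ℚ) (v : Fin N → ℚ) : Matrix (Fin N) (Fin N) ℚ :=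
  1 - (2 / bl G v v) • Matrix.vecMulVec v (G.mulVec v)

lemma rfm_mulVec (v x : Fin N → ℚ) :
    (rfm G v).mulVec x = x - (2 * bl G x v / bl G v v) • v := by
  rw [rfm, Matrix.sub_mulVec, Matrix.one_mulVec, Matrix.smul_mulVec, Matrix.vecMulVec_mulVec,
    bl_dot x v, dotProduct_comm x]
  funext i
  simp
  ring

lemma rfm_invol (v : Fin N → ℚ) (hv : bl G v v ≠ 0) : rfm G v * rfm G v = 1 := by
  apply Matrix.toLin'.injective
  apply LinearMap.ext
  intro x
  rw [Matrix.toLin'_apply, Matrix.toLin'_apply, ← Matrix.mulVec_mulVec, rfm_mulVec, rfm_mulVec,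
    Matrix.one_mulVec]
  simp only [map_sub, map_smul, LinearMap.sub_apply, LinearMap.smul_apply, smul_eq_mul]
  funext i
  simp
  field_simp
  ring

lemma rfm_isom (hG : ∀ i j, G i j = G j i) (v : Fin N → ℚ) (hv : bl G v v ≠ 0) (x y : Fin N → ℚ) :
    bl G ((rfm G v).mulVec x) ((rfm G v).mulVec y) = bl G x y := by
  rw [rfm_mulVec, rfm_mulVec]
  simp only [map_sub, map_smul, LinearMap.sub_apply, LinearMap.smul_apply, smul_eq_mul]
  rw [bl_symm hG v y]
  field_simp
  ring

lemma IB_mulVec {A : Matrix (Fin N) (Fin N) ℚ} {a b : ℕ} {v : Fin N → ℚ} (hA : ∀ i j, IB a (A i j))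
    (hv : ∀ i, IB b (v i)) (i : Fin N) : IB (N * (a * b)) (A.mulVec v i) :=
  IB.sum fun j => (hA i j).mul (hv j)

lemma IB_dot {a b : ℕ} {v w : Fin N → ℚ} (hA : ∀ i, IB a (w i))
    (hv : ∀ i, IB b (v i)) : IB (N * (a * b)) (w ⬝ᵥ v) :=
  IB.sum fun j => (hA j).mul (hv j)

lemma IB_matmul {A A' : Matrix (Fin N) (Fin N) ℚ} {a b : ℕ} (hA : ∀ i j, IB a (A i j))
    (hv : ∀ i j, IB b (A' i j)) (i j : Fin N) : IB (N * (a * b)) ((A * A') i j) := by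
  rw [Matrix.mul_apply]
  exact IB.sum fun k => (hA i k).mul (hv k j)

lemma IB_bl {H a b : ℕ} (hG : ∀ i j, IB H (G i j)) {v w : Fin N → ℚ} (hv : ∀ i, IB a (v i))
    (hw : ∀ i, IB b (w i)) : IB (N * (a * (N * (H * b)))) (bl G v w) := by
  rw [bl_dot]
  exact IB_dot hv (IB_mulVec hG hw)

lemma IB_rfm {H V : ℕ} (hG : ∀ i j, IB H (G i j)) {v : Fin N → ℚ} (hv : ∀ i, IB V (v i))
    (h0 : bl G v v ≠ 0) (i j : Fin N) :
    IB ((N ^ 2 + 2 * N) * (H * V ^ 2)) (bl G v v * rfm G v i j) := by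
  have : bl G v v * rfm G v i j
      = bl G v v * (1 : Matrix (Fin N) (Fin N) ℚ) i j - 2 * (v i * G.mulVec v j) := by
    simp only [rfm, Matrix.sub_apply, Matrix.smul_apply, Matrix.vecMulVec_apply, smul_eq_mul]
    field_simp
  rw [this]
  have h1 : IB 1 ((1 : Matrix (Fin N) (Fin N) ℚ) i j) := by
    rw [Matrix.one_apply]
    split_ifs
    · exact IB.one
    · exact IB.zero _
  refine (((IB_bl hG hv hv).mul h1).sub (IB.two.mul ((hv i).mul (IB_mulVec hG hv j)))).mono ?_
  apply le_of_eq; ring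

end

def ee : ℕ → ℕ
  | 0 => 0
  | k + 1 => 3 * ee k + 1

def ss : ℕ → ℕ
  | 0 => 0
  | k + 1 => 3 * ss k + 1 + 2 * ee k

lemma ee_eq (k : ℕ) : 2 * ee k + 1 = 3 ^ k := by
  induction k with
  | zero => rfl
  | succ k ih => rw [ee, pow_succ]; omega

lemma ss_eq (k : ℕ) : 3 * ss k = k * 3 ^ k := by
  induction k with
  | zero => rfl
  | succ k ih =>
    have := ee_eq k
    rw [ss, pow_succ]
    have h2 : 3 * (3 * ss k + 1 + 2 * ee k) = 3 * (3 * ss k) + 3 * (2 * ee k + 1) := by ring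
    rw [h2, ih, this]; ring

lemma exists_aniso {N : ℕ} {G : Matrix (Fin N) (Fin N) ℚ} (hG : ∀ i j, G i j = G j i)
    (P : Matrix (Fin N) (Fin N) ℚ) (h : ¬ ∀ u w, bl G (P.mulVec u) (P.mulVec w) = 0) :
    ∃ u : Fin N → ℚ, (∃ i, ∃ j, u = Pi.single i 1 ∨ u = Pi.single i 1 + Pi.single j 1) ∧
      bl G (P.mulVec u) (P.mulVec u) ≠ 0 := by
  by_contra hc
  push Not at hc
  apply h
  have h1 : ∀ i j, bl G (P.mulVec (Pi.single i 1)) (P.mulVec (Pi.single j 1)) = 0 := by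
    intro i j
    have a1 := hc (Pi.single i 1) ⟨i, i, Or.inl rfl⟩
    have a2 := hc (Pi.single j 1) ⟨j, j, Or.inl rfl⟩
    have a3 := hc (Pi.single i 1 + Pi.single j 1) ⟨i, j, Or.inr rfl⟩
    simp only [Matrix.mulVec_add, map_add, LinearMap.add_apply] at a3
    rw [bl_symm hG (P.mulVec (Pi.single j 1)) (P.mulVec (Pi.single i 1))] at a3
    linarith
  have h2 : (bl G).comp (Matrix.toLin' P) (Matrix.toLin' P) = 0 := by
    apply LinearMap.BilinForm.ext_basis (Pi.basisFun ℚ (Fin N))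
    intro i j
    simpa using h1 i j
  intro u w
  have := congrArg (fun (B : LinearMap.BilinForm ℚ (Fin N → ℚ)) => B u w) h2
  simpa using this

lemma lemA (N k : ℕ) (hk : k ≤ N) : ∃ C : ℕ, 1 ≤ C ∧ ∀ (H : ℕ) (G : Matrix (Fin N) (Fin N) ℚ),
    (∀ i j, G i j = G j i) → G.det ≠ 0 → (∀ i j, IB H (G i j)) →
    ∃ (x : ℕ → Fin N → ℚ) (P : Matrix (Fin N) (Fin N) ℚ),
      (∀ i < k, ∀ a, IB (C * H ^ ee i) (x i a)) ∧ (∀ a b, IB (C * H ^ ee k) (P a b)) ∧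
      (∀ i < k, bl G (x i) (x i) ≠ 0) ∧ (∀ i < k, ∀ j < k, i ≠ j → bl G (x i) (x j) = 0) ∧
      (∀ i < k, ∀ u, bl G (P.mulVec u) (x i) = 0) ∧
      ∃ q : ℚ, q ≠ 0 ∧ ∀ u, q • u - P.mulVec u ∈
        Submodule.span ℚ (((Finset.range k).image x : Finset (Fin N → ℚ)) : Set (Fin N → ℚ)) := by
  classical
  induction k with
  | zero =>
    refine ⟨1, le_rfl, fun H G hG hd hH => ⟨fun _ _ => 0, 1, by simp, ?_, by simp, by simp, by simp,
      1, one_ne_zero, by simp⟩⟩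
    intro a b
    rw [Matrix.one_apply]
    split_ifs
    · simpa [ee] using IB.one
    · exact IB.zero _
  | succ k ih =>
    obtain ⟨C, hC1, hC⟩ := ih (by omega)
    refine ⟨3 * C + 8 * N ^ 2 * C ^ 3, by omega, fun H G hG hd hH => ?_⟩
    obtain ⟨x, P, hx, hP, hani, horth, hPx, q, hq, hspan⟩ := hC H G hG hd hH
    have hne : ¬ ∀ u w, bl G (P.mulVec u) (P.mulVec w) = 0 := by
      intro h0
      have hbS : ∀ u, ∀ s ∈ Submodule.span ℚ
          (((Finset.range k).image x : Finset (Fin N → ℚ)) : Set (Fin N → ℚ)),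
          bl G (P.mulVec u) s = 0 := by
        intro u s hs
        refine (Submodule.span_le (p := LinearMap.ker (bl G (P.mulVec u)))).2 ?_ hs
        intro y hy
        simp only [Finset.coe_image, Set.mem_image, Finset.coe_range, Set.mem_Iio] at hy
        obtain ⟨i, hi, rfl⟩ := hy
        exact hPx i hi u
      have hPu : ∀ u, P.mulVec u = 0 := by
        intro u
        apply bl_nondeg hd
        intro w
        have h1 := hbS u _ (hspan w)
        rw [map_sub, h0, map_smul, sub_zero, smul_eq_mul] at h1
        rw [bl_symm hG]
        exact (mul_eq_zero.1 h1).resolve_left hq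
      have htop : Submodule.span ℚ
          (((Finset.range k).image x : Finset (Fin N → ℚ)) : Set (Fin N → ℚ)) = ⊤ := by
        rw [eq_top_iff]
        intro u _
        have := hspan u
        rw [hPu, sub_zero] at this
        exact (Submodule.smul_mem_iff _ hq).1 this
      have h3 := finrank_span_finset_le_card (R := ℚ) ((Finset.range k).image x)
      rw [Set.finrank, htop, finrank_top, Module.finrank_fin_fun] at h3
      have h4 := Finset.card_image_le (s := Finset.range k) (f := x)
      rw [Finset.card_range] at h4
      omega
    obtain ⟨u, hu, hxx⟩ := exists_aniso hG P hne
    set z := P.mulVec u with hz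
    have hzb : ∀ a, IB (2 * (C * H ^ ee k)) (z a) := by
      intro a
      obtain ⟨i, j, rfl | rfl⟩ := hu
      · rw [hz]
        simp only [Matrix.mulVec_single_one, Matrix.col_apply]
        exact (hP a i).mono (by omega)
      · rw [hz]
        simp only [Matrix.mulVec_add, Matrix.mulVec_single_one, Matrix.col_apply, Pi.add_apply]
        exact ((hP a i).add (hP a j)).mono (by omega)
    have hP' : ∀ w, (bl G z z • P - Matrix.vecMulVec z (P.transpose.mulVec (G.mulVec z))).mulVec w
        = bl G z z • P.mulVec w - bl G (P.mulVec w) z • z := by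
      intro w
      rw [Matrix.sub_mulVec, Matrix.smul_mulVec, Matrix.vecMulVec_mulVec, bl_dot (P.mulVec w)]
      have : (P.transpose.mulVec (G.mulVec z)) ⬝ᵥ w = P.mulVec w ⬝ᵥ G.mulVec z := by
        rw [Matrix.mulVec_transpose, ← Matrix.dotProduct_mulVec, dotProduct_comm]
      rw [this]
      simp
    have hzx : ∀ i < k, bl G z (x i) = 0 := fun i hi => hPx i hi u
    refine ⟨fun i => if i = k then z else x i,
      bl G z z • P - Matrix.vecMulVec z (P.transpose.mulVec (G.mulVec z)), ?_, ?_, ?_, ?_, ?_,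
      bl G z z * q, mul_ne_zero hxx hq, ?_⟩
    · intro i hi a
      by_cases h : i = k
      · subst h
        simp only [if_true]
        refine (hzb a).mono ?_
        rw [← mul_assoc]
        exact Nat.mul_le_mul_right _ (by nlinarith [Nat.zero_le (8 * N ^ 2 * C ^ 3)])
      · simp only [h, if_false]
        refine (hx i (by omega) a).mono ?_
        exact Nat.mul_le_mul_right _ (by nlinarith [Nat.zero_le (8 * N ^ 2 * C ^ 3)])
    · intro a b
      rw [Matrix.sub_apply, Matrix.smul_apply, Matrix.vecMulVec_apply, smul_eq_mul]
      refine (((IB_bl hH hzb hzb).mul (hP a b)).sub ((hzb a).mul (IB_mulVec (fun i j => hP j i)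
        (IB_mulVec hH hzb) b))).mono ?_
      have : H ^ ee (k + 1) = H * (H ^ ee k) ^ 3 := by rw [ee]; ring
      rw [this]
      have : 0 ≤ 3 * C * (H * (H ^ ee k) ^ 3) := by positivity
      nlinarith
    · intro i hi
      by_cases h : i = k
      · simpa [h] using hxx
      · simpa [h] using hani i (by omega)
    · intro i hi j hj hij
      by_cases h : i = k
      · have h' : j ≠ k := by omega
        simp only [h, h', if_true, if_false]
        exact hzx j (by omega)
      · by_cases h' : j = k
        · simp only [h, h', if_true, if_false]
          rw [bl_symm hG]
          exact hzx i (by omega)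
        · simp only [h, h', if_false]
          exact horth i (by omega) j (by omega) hij
    · intro i hi w
      rw [hP']
      by_cases h : i = k
      · simp only [h, if_true, map_sub, map_smul, LinearMap.sub_apply, LinearMap.smul_apply, smul_eq_mul]
        ring
      · simp only [h, if_false, map_sub, map_smul, LinearMap.sub_apply, LinearMap.smul_apply, smul_eq_mul]
        rw [hPx i (by omega), hzx i (by omega)]
        ring
    · intro w
      rw [hP']
      have : (bl G z z * q) • w - (bl G z z • P.mulVec w - bl G (P.mulVec w) z • z)
          = bl G z z • (q • w - P.mulVec w) + bl G (P.mulVec w) z • z := by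
        rw [smul_sub, smul_smul]; abel
      rw [this]
      refine Submodule.add_mem _ (Submodule.smul_mem _ _ ?_) (Submodule.smul_mem _ _ ?_)
      · refine Submodule.span_mono ?_ (hspan w)
        intro y hy
        simp only [Finset.coe_image, Set.mem_image, Finset.coe_range, Set.mem_Iio] at hy ⊢
        obtain ⟨i, hi, rfl⟩ := hy
        exact ⟨i, by omega, by simp [show i ≠ k by omega]⟩
      · apply Submodule.subset_span
        simp only [Finset.coe_image, Set.mem_image, Finset.coe_range, Set.mem_Iio]
        exact ⟨k, by omega, by simp⟩

/-- isometry predicate -/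
def Iso {N : ℕ} (G S : Matrix (Fin N) (Fin N) ℚ) : Prop :=
  ∀ x y, bl G (S.mulVec x) (S.mulVec y) = bl G x y

lemma lemB (N C0 k : ℕ) (hk : k ≤ N) (hC0 : 1 ≤ C0) : ∃ C : ℕ, ∀ (H K : ℕ) (G : Matrix (Fin N) (Fin N) ℚ)
    (x : ℕ → Fin N → ℚ) (σ : Matrix (Fin N) (Fin N) ℚ),
    (∀ i j, G i j = G j i) → (∀ i j, IB H (G i j)) →
    (∀ i < N, ∀ a, IB (C0 * H ^ ee i) (x i a)) →
    (∀ i < N, bl G (x i) (x i) ≠ 0) → (∀ i < N, ∀ j < N, i ≠ j → bl G (x i) (x j) = 0) →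
    Iso G σ → (∃ d : ℚ, d ≠ 0 ∧ IB (C0 * K) d ∧ ∀ i j, IB (C0 * K) (d * σ i j)) →
    ∃ (L : List (Matrix (Fin N) (Fin N) ℚ)) (σ' : Matrix (Fin N) (Fin N) ℚ),
      L.length ≤ k ∧ σ = L.prod * σ' ∧ Iso G σ' ∧
      (∀ i < k, σ'.mulVec (x i) = x i ∨ σ'.mulVec (x i) = - x i) ∧
      (∃ d : ℚ, d ≠ 0 ∧ IB (C * (H ^ ss k * K ^ 3 ^ k)) d ∧
        ∀ i j, IB (C * (H ^ ss k * K ^ 3 ^ k)) (d * σ' i j)) ∧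
      ∀ τ ∈ L, ∃ i < k, ∃ v, bl G v v ≠ 0 ∧ τ = rfm G v ∧
        ∀ a, IB (C * (H ^ (ss i + ee i) * K ^ 3 ^ i)) (v a) := by
  induction k with
  | zero =>
    refine ⟨C0, fun H K G x σ hG hH hx hani horth hσ hd => ⟨[], σ, by simp, by simp, hσ, by simp, ?_,
      by simp⟩⟩
    simpa [ss] using hd
  | succ k ih =>
    obtain ⟨C, hC⟩ := ih (by omega)
    set V0 := 2 * N * C * C0 + 2 * C * C0 with hV0
    refine ⟨C + V0 + (N + 1) * ((N ^ 2 + 2 * N) * V0 ^ 2 * C), fun H K G x σ hG hH hx hani horth hσ hd => ?_⟩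
    obtain ⟨L, σ', hL, hprod, hσ', hfix, ⟨d, hd0, hdb, hdσ⟩, hLb⟩ := hC H K G x σ hG hH hx hani horth hσ hd
    set D := H ^ ss k * K ^ 3 ^ k with hD
    set X := H ^ ee k with hX
    have hkx := hani k (by omega)
    set w := σ'.mulVec (x k) with hw
    have hww : bl G w w = bl G (x k) (x k) := hσ' _ _
    have hex : ∃ s : ℚ, (s = 1 ∨ s = -1) ∧ bl G (w - s • x k) (w - s • x k) ≠ 0 := by
      by_contra hc
      push Not at hc
      have h1 := hc 1 (Or.inl rfl)
      have h2 := hc (-1) (Or.inr rfl)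
      simp only [map_sub, map_smul, LinearMap.sub_apply, LinearMap.smul_apply, smul_eq_mul] at h1 h2
      apply hkx
      linarith
    obtain ⟨s, hs, hvs⟩ := hex
    have hs2 : s * s = 1 := by rcases hs with rfl | rfl <;> norm_num
    set v := d • (w - s • x k) with hv
    have hvv : bl G v v = d * d * bl G (w - s • x k) (w - s • x k) := by
      rw [hv]; simp only [map_smul, LinearMap.smul_apply, smul_eq_mul]; ring
    have hv0 : bl G v v ≠ 0 := by
      rw [hvv]; exact mul_ne_zero (mul_ne_zero hd0 hd0) hvs
    have hvb : ∀ a, IB (V0 * (D * X)) (v a) := by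
      intro a
      have e : v a = (d • σ').mulVec (x k) a - d * (s * x k a) := by
        rw [Matrix.smul_mulVec, hv, hw]
        simp only [Pi.smul_apply, Pi.sub_apply, smul_eq_mul]; ring
      have hs1 : IB 1 s := by
        rcases hs with rfl | rfl
        · exact IB.one
        · exact ⟨-1, by norm_num, by norm_num⟩
      rw [e]
      refine ((IB_mulVec (A := d • σ') (fun i j => by simpa using hdσ i j) (hx k (by omega)) a).sub
        (hdb.mul (hs1.mul (hx k (by omega) a)))).mono ?_
      have : 0 ≤ N * C * C0 * (D * X) := by positivity
      have : 0 ≤ C * C0 * (D * X) := by positivity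
      rw [hV0, ← hX]
      nlinarith
    have hvx : ∀ i < k, bl G (x i) v = 0 := by
      intro i hi
      have h1 : bl G (x i) w = 0 := by
        have h2 : bl G (σ'.mulVec (x i)) w = 0 := by
          rw [hw, hσ']; exact horth i (by omega) k (by omega) (by omega)
        rcases hfix i hi with h | h
        · rwa [h] at h2
        · rw [h] at h2; simpa using h2
      rw [hv]
      simp only [map_sub, map_smul, smul_eq_mul]
      rw [h1, horth i (by omega) k (by omega) (by omega)]
      ring
    have hτw : (rfm G v).mulVec w = s • x k := by
      rw [rfm_mulVec]
      have h1 : 2 * bl G w v / bl G v v = d⁻¹ := by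
        have : 2 * bl G w v = d * bl G (w - s • x k) (w - s • x k) := by
          rw [hv]
          simp only [map_sub, map_smul, LinearMap.sub_apply, LinearMap.smul_apply, smul_eq_mul]
          rw [bl_symm hG (x k) w, ← hww]
          linear_combination (-d * bl G w w) * hs2
        rw [this, hvv]
        field_simp
      rw [h1, hv, smul_smul, inv_mul_cancel₀ hd0, one_smul]
      abel
    refine ⟨L ++ [rfm G v], rfm G v * σ', by simpa using hL, ?_, ?_, ?_, ?_, ?_⟩
    · rw [List.prod_append, List.prod_singleton, mul_assoc, ← mul_assoc (rfm G v), rfm_invol v hv0, one_mul]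
      exact hprod
    · intro a b
      rw [← Matrix.mulVec_mulVec, ← Matrix.mulVec_mulVec, rfm_isom hG v hv0, hσ']
    · intro i hi
      rw [← Matrix.mulVec_mulVec]
      by_cases h : i = k
      · subst h
        rw [← hw, hτw]
        rcases hs with rfl | rfl
        · left; simp
        · right; simp
      · have hik : i < k := by omega
        have hf : (rfm G v).mulVec (x i) = x i := by
          rw [rfm_mulVec, hvx i hik]; simp
        rcases hfix i hik with h | h
        · left; rw [h, hf]
        · right; rw [h, Matrix.mulVec_neg, hf]
    · have hpow : H ^ ss (k + 1) * K ^ 3 ^ (k + 1) = H * D ^ 3 * X ^ 2 := by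
        rw [hD, hX, ss, pow_succ 3 k, pow_mul K]; ring
      refine ⟨bl G v v * d, mul_ne_zero hv0 hd0, ?_, ?_⟩
      · rw [hpow]
        refine ((IB_bl hH hvb hvb).mul hdb).mono ?_
        calc _ = N ^ 2 * V0 ^ 2 * C * (H * D ^ 3 * X ^ 2) := by ring
          _ ≤ _ := by
            apply Nat.mul_le_mul_right
            have : 0 ≤ N * (N ^ 2 + 2 * N) * (V0 ^ 2 * C) := by positivity
            have : 0 ≤ N * (V0 ^ 2 * C) := by positivity
            nlinarith
      · intro i j
        have e : bl G v v * d * (rfm G v * σ') i j = ((bl G v v • rfm G v) * (d • σ')) i j := by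
          rw [Matrix.smul_mul, Matrix.mul_smul]
          simp only [Matrix.smul_apply, smul_eq_mul]; ring
        rw [hpow, e]
        refine (IB_matmul (fun i j => by simpa using IB_rfm hH hvb hv0 i j)
          (fun i j => by simpa using hdσ i j) i j).mono ?_
        calc _ = N * ((N ^ 2 + 2 * N) * V0 ^ 2 * C) * (H * D ^ 3 * X ^ 2) := by ring
          _ ≤ _ := by
            apply Nat.mul_le_mul_right
            nlinarith [Nat.zero_le ((N ^ 2 + 2 * N) * V0 ^ 2 * C)]
    · intro τ hτ
      rw [List.mem_append, List.mem_singleton] at hτ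
      rcases hτ with hτ | rfl
      · obtain ⟨i, hi, u, hu, e, hb⟩ := hLb τ hτ
        exact ⟨i, by omega, u, hu, e, fun a => (hb a).mono (Nat.mul_le_mul_right _ (by omega))⟩
      · refine ⟨k, by omega, v, hv0, rfl, fun a => (hvb a).mono ?_⟩
        have : H ^ (ss k + ee k) * K ^ 3 ^ k = D * X := by rw [hD, hX]; ring
        rw [this]
        exact Nat.mul_le_mul_right _ (by omega)

lemma lemC {N : ℕ} {G : Matrix (Fin N) (Fin N) ℚ} {x : ℕ → Fin N → ℚ}
    (hani : ∀ i < N, bl G (x i) (x i) ≠ 0)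
    (horth : ∀ i < N, ∀ j < N, i ≠ j → bl G (x i) (x j) = 0)
    (σ : Matrix (Fin N) (Fin N) ℚ)
    (hfix : ∀ i < N, σ.mulVec (x i) = x i ∨ σ.mulVec (x i) = - x i) (k : ℕ) (hk : k ≤ N) :
    ∃ (L : List (Matrix (Fin N) (Fin N) ℚ)) (σ' : Matrix (Fin N) (Fin N) ℚ),
      L.length ≤ k ∧ σ = L.prod * σ' ∧
      (∀ i < N, σ'.mulVec (x i) = x i ∨ σ'.mulVec (x i) = - x i) ∧
      (∀ i < k, σ'.mulVec (x i) = x i) ∧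
      ∀ τ ∈ L, ∃ i < k, τ = rfm G (x i) := by
  induction k with
  | zero => exact ⟨[], σ, by simp, by simp, hfix, by simp, by simp⟩
  | succ k ih =>
    obtain ⟨L, σ', hL, hprod, hf, hf', hLb⟩ := ih (by omega)
    rcases hf k (by omega) with h | h
    · refine ⟨L, σ', by omega, hprod, hf, ?_, fun τ hτ => ?_⟩
      · intro i hi
        rcases Nat.lt_succ_iff_lt_or_eq.1 hi with h' | rfl
        · exact hf' i h'
        · exact h
      · obtain ⟨i, hi, e⟩ := hLb τ hτ
        exact ⟨i, by omega, e⟩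
    · have h0 := hani k (by omega)
      have hr : ∀ i < N, i ≠ k → (rfm G (x k)).mulVec (x i) = x i := by
        intro i hi hik
        rw [rfm_mulVec, horth i hi k (by omega) hik]; simp
      have hrk : (rfm G (x k)).mulVec (x k) = - x k := by
        rw [rfm_mulVec, mul_div_assoc, div_self h0, mul_one, two_smul]; abel
      have hk1 : (rfm G (x k) * σ').mulVec (x k) = x k := by
        rw [← Matrix.mulVec_mulVec, h, Matrix.mulVec_neg, hrk, neg_neg]
      refine ⟨L ++ [rfm G (x k)], rfm G (x k) * σ', by simpa using hL, ?_, ?_, ?_, ?_⟩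
      · rw [List.prod_append, List.prod_singleton, mul_assoc, ← mul_assoc (rfm G (x k)),
          rfm_invol _ h0, one_mul]
        exact hprod
      · intro i hi
        by_cases hik : i = k
        · subst hik; left; exact hk1
        · rw [← Matrix.mulVec_mulVec]
          rcases hf i hi with h' | h'
          · left; rw [h', hr i hi hik]
          · right; rw [h', Matrix.mulVec_neg, hr i hi hik]
      · intro i hi
        rcases Nat.lt_succ_iff_lt_or_eq.1 hi with h' | rfl
        · rw [← Matrix.mulVec_mulVec, hf' i h', hr i (by omega) (by omega)]
        · exact hk1
      · intro τ hτ
        rw [List.mem_append, List.mem_singleton] at hτ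
        rcases hτ with hτ | rfl
        · obtain ⟨i, hi, e⟩ := hLb τ hτ
          exact ⟨i, by omega, e⟩
        · exact ⟨k, by omega, rfl⟩

lemma rfm_isReflection {N : ℕ} {f : Fin N → Fin N → ℚ} {G : Matrix (Fin N) (Fin N) ℚ} {c : ℚ}
    (hc : c ≠ 0) (hcf : ∀ i j, G i j = c * f i j) (hG : ∀ i j, G i j = G j i)
    (v : Fin N → ℚ) (hv : bl G v v ≠ 0) : IsReflection N f (rfm G v) := by
  have hbl : ∀ x y : Fin N → ℚ, bl G x y = c * ∑ i, ∑ j, f i j * x i * y j := by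
    intro x y
    simp only [Matrix.toBilin'_apply, Finset.mul_sum, hcf]
    refine Finset.sum_congr rfl fun i _ => Finset.sum_congr rfl fun j _ => by ring
  refine ⟨⟨?_, ?_⟩, ?_⟩
  · have := congrArg Matrix.det (rfm_invol v hv)
    rw [Matrix.det_mul, Matrix.det_one] at this
    exact IsUnit.of_mul_eq_one _ this
  · intro x y
    have := rfm_isom hG v hv x y
    rw [hbl, hbl] at this
    exact mul_left_cancel₀ hc this
  · have hker : LinearMap.ker ((rfm G v).mulVecLin - (LinearMap.id : (Fin N → ℚ) →ₗ[ℚ] (Fin N → ℚ)))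
        = LinearMap.ker (bl G v) := by
      ext x
      rw [LinearMap.mem_ker, LinearMap.mem_ker, LinearMap.sub_apply, Matrix.mulVecLin_apply,
        rfm_mulVec, LinearMap.id_apply, sub_sub_cancel_left, neg_eq_zero, bl_symm hG v x]
      have hv0 : v ≠ 0 := by rintro rfl; simp at hv
      rw [smul_eq_zero]
      constructor
      · rintro (h | h)
        · field_simp at h
          simpa using h
        · exact absurd h hv0
      · intro h; left; rw [h]; simp
    rw [hker]
    have := Module.Dual.finrank_ker_add_one_of_ne_zero (K := ℚ) (f := bl G v)
      (by intro h; apply hv; rw [h]; simp)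
    rw [Module.finrank_fin_fun] at this
    omega

lemma rfm_height {N H V : ℕ} {G : Matrix (Fin N) (Fin N) ℚ} (hH : ∀ i j, IB H (G i j))
    {v : Fin N → ℚ} (hv : ∀ i, IB V (v i)) (h0 : bl G v v ≠ 0) :
    matHeight (rfm G v) ≤ (N ^ 2 + 2 * N) * (H * V ^ 2) := by
  refine ht_le _ ?_ (bl G v v) h0 _ (fun p => IB_rfm hH hv h0 p.1 p.2)
  by_contra hc
  push Not at hc
  have hz : rfm G v = 0 := by
    ext i j; exact hc (i, j)
  have h1 := rfm_invol v h0
  rw [hz, zero_mul] at h1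
  apply h0
  have : v = 0 := by
    rw [← Matrix.one_mulVec v, ← h1, Matrix.zero_mulVec]
  rw [this]; simp

lemma iso_det {N : ℕ} {G σ : Matrix (Fin N) (Fin N) ℚ} (hd : G.det ≠ 0) (h : Iso G σ) :
    σ.det ^ 2 = 1 := by
  have h1 : (bl G).comp (Matrix.toLin' σ) (Matrix.toLin' σ) = bl G := by
    apply LinearMap.ext; intro x
    apply LinearMap.ext; intro y
    simpa using h x y
  rw [Matrix.toBilin'_comp] at h1
  have h2 := congrArg Matrix.det (Matrix.toBilin'.injective h1)
  rw [Matrix.det_mul, Matrix.det_mul, Matrix.det_transpose] at h2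
  apply mul_right_cancel₀ hd
  linear_combination h2

lemma IB_scale {N K : ℕ} (hN : N ≠ 0) {σ : Matrix (Fin N) (Fin N) ℚ} (h : σ.det ^ 2 = 1) {c : ℚ}
    (hb : ∀ i j, IB K (c * σ i j)) : IB (N.factorial * K) c := by
  choose S hS hSK using hb
  have hm : (Matrix.of S).map (Int.cast : ℤ → ℚ) = c • σ := by
    ext i j; simp [hS]
  have hdet : (((Matrix.of S).det : ℤ) : ℚ) = c ^ N * σ.det := by
    have := congrArg Matrix.det hm
    rw [Matrix.det_smul, Fintype.card_fin] at this
    rw [← this]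
    exact (Int.cast_det _)
  have hsq : (((Matrix.of S).det ^ 2 : ℤ) : ℚ) = c ^ (N * 2) := by
    rw [Int.cast_pow, hdet, mul_pow, h, mul_one, pow_mul]
  have hden : c.den = 1 := by
    have h1 := congrArg Rat.den hsq
    rw [Rat.den_intCast, Rat.den_pow] at h1
    exact (Nat.pow_eq_one.1 h1.symm).resolve_right (by omega)
  have hcn : (c.num : ℚ) = c := Rat.coe_int_num_of_den_eq_one hden
  refine ⟨c.num, hcn, ?_⟩
  have hsq' : (Matrix.of S).det ^ 2 = (c.num ^ N) ^ 2 := by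
    rw [← pow_mul]
    have : (((Matrix.of S).det ^ 2 : ℤ) : ℚ) = ((c.num ^ (N * 2) : ℤ) : ℚ) := by
      rw [hsq]; push_cast; rw [hcn]
    exact_mod_cast this
  have hab : (Matrix.of S).det.natAbs = c.num.natAbs ^ N := by
    rw [← Int.natAbs_pow]
    exact Int.natAbs_eq_iff_sq_eq.2 hsq'
  have hle := Matrix.det_le (A := Matrix.of S) (abv := AbsoluteValue.abs) (x := (K : ℤ))
    (fun i j => by
      have := hSK i j
      simp only [Matrix.of_apply, AbsoluteValue.abs_apply]
      rw [Int.abs_eq_natAbs]; exact_mod_cast this)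
  rw [AbsoluteValue.abs_apply, Int.abs_eq_natAbs, hab, Fintype.card_fin, nsmul_eq_mul] at hle
  have hle' : c.num.natAbs ^ N ≤ N.factorial * K ^ N := by exact_mod_cast hle
  refine (Nat.pow_le_pow_iff_left hN).1 (hle'.trans ?_)
  rw [mul_pow]
  exact Nat.mul_le_mul_right _ (Nat.le_self_pow hN _)

lemma pow_bound {N H K a b : ℕ} (hH : 1 ≤ H) (hK : 1 ≤ K) (ha : 3 * a ≤ N * 5 ^ (N - 1))
    (hb : b ≤ 5 ^ (N - 1)) :
    ((H ^ a * K ^ b : ℕ) : ℝ) ≤ ((H : ℝ) ^ ((N : ℝ) / 3) * (K : ℝ)) ^ (5 ^ (N - 1)) := by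
  have hH' : (1 : ℝ) ≤ H := by exact_mod_cast hH
  have hK' : (1 : ℝ) ≤ K := by exact_mod_cast hK
  rw [mul_pow]
  push_cast
  refine mul_le_mul ?_ (pow_le_pow_right₀ hK' hb) (by positivity) (by positivity)
  rw [← Real.rpow_natCast, ← Real.rpow_natCast, ← Real.rpow_mul (by positivity)]
  apply Real.rpow_le_rpow_of_exponent_le hH'
  have : (3 : ℝ) * a ≤ N * 5 ^ (N - 1) := by exact_mod_cast ha
  push_cast
  linarith

lemma exp1 {N i : ℕ} (hN : 2 ≤ N) (hi : i < N - 1) :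
    3 * (1 + 2 * (ss i + ee i)) ≤ N * 5 ^ (N - 1) ∧ 2 * 3 ^ i ≤ 5 ^ (N - 1) := by
  have h1 := ss_eq i
  have h2 := ee_eq i
  obtain ⟨n, rfl⟩ : ∃ n, N = n + 2 := ⟨N - 2, by omega⟩
  have h3 : 3 ^ i ≤ 5 ^ n := (Nat.pow_le_pow_left (by norm_num) i).trans
    (Nat.pow_le_pow_right (by norm_num) (by omega))
  have h4 : 5 ^ (n + 2 - 1) = 5 * 5 ^ n := by
    rw [show n + 2 - 1 = n + 1 by omega, pow_succ]; ring
  rw [h4]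
  have h5 : i * 3 ^ i ≤ n * 5 ^ n := Nat.mul_le_mul (by omega) h3
  constructor
  · have : (n + 2) * (5 * 5 ^ n) = 5 * (n * 5 ^ n) + 10 * 5 ^ n := by ring
    omega
  · omega

lemma exp2 {N i : ℕ} (hN : 2 ≤ N) (hi : i < N) : 3 * (1 + 2 * ee i) ≤ N * 5 ^ (N - 1) := by
  have h2 := ee_eq i
  rw [show 1 + 2 * ee i = 3 ^ i by omega]
  obtain ⟨n, rfl⟩ : ∃ n, N = n + 2 := ⟨N - 2, by omega⟩
  have h3 : 3 ^ i ≤ 3 ^ (n + 1) := Nat.pow_le_pow_right (by norm_num) (by omega)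
  have h3' : 3 ^ n ≤ 5 ^ n := Nat.pow_le_pow_left (by norm_num) n
  rw [show n + 2 - 1 = n + 1 by omega]
  rw [pow_succ] at h3 ⊢
  have : (n + 2) * (5 ^ n * 5) = 5 * (n * 5 ^ n) + 10 * 5 ^ n := by ring
  omega

/-- **Effective Cartan–Dieudonné theorem over ℚ.** If `(ℚ^N, F)` is a regular quadratic space,
then every non-identity isometry `σ` is a product of `1 ≤ l ≤ 2N − 1` reflections `τ_i` with
`H(τ_i) ≤ C(N) · (H(F)^(N/3) · H(σ))^(5^(N−1))`. -/
theorem effective_cartan_dieudonne (N : ℕ) (hN : 2 ≤ N) :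
    ∃ C : ℝ, 0 < C ∧
      ∀ (f : Fin N → Fin N → ℚ), (∀ i j, f i j = f j i) →
      (Matrix.of f).det ≠ 0 →
      ∀ σ : Matrix (Fin N) (Fin N) ℚ, IsIsometry N f σ →
      σ = 1 ∨
        ∃ l : ℕ, 1 ≤ l ∧ l ≤ 2 * N - 1 ∧
          ∃ τ : Fin l → Matrix (Fin N) (Fin N) ℚ,
            (∀ i, IsReflection N f (τ i)) ∧
            σ = (List.ofFn τ).prod ∧
            ∀ i, ((matHeight (τ i) : ℕ) : ℝ) ≤
              C * (((projHeight fun p : Fin N × Fin N => f p.1 p.2 : ℕ) : ℝ) ^ ((N : ℝ) / 3) *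
                  ((matHeight σ : ℕ) : ℝ)) ^ (5 ^ (N - 1)) := by
  classical
  obtain ⟨CA, hCA1, hA⟩ := lemA N N le_rfl
  set C0 := CA * N.factorial with hC0
  have hC01 : 1 ≤ C0 := Nat.mul_pos hCA1 N.factorial_pos
  obtain ⟨CB, hB⟩ := lemB N C0 (N - 1) (by omega) hC01
  set CC : ℕ := (N ^ 2 + 2 * N) * (CB + CA) ^ 2 + 1 with hCC
  refine ⟨CC, by exact_mod_cast Nat.succ_pos _, fun f hf hfd σ hσ => ?_⟩
  have hN0 : N ≠ 0 := by omega
  have : Nonempty (Fin N) := ⟨⟨0, by omega⟩⟩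
  have nz : ∀ A : Matrix (Fin N) (Fin N) ℚ, A.det ≠ 0 → ∃ p : Fin N × Fin N, A p.1 p.2 ≠ 0 := by
    intro A hA
    by_contra hc
    push Not at hc
    apply hA
    have : A = 0 := by ext i j; exact hc (i, j)
    rw [this, Matrix.det_zero]
  obtain ⟨hH1, c, hc, hcb⟩ := ht_spec (fun p : Fin N × Fin N => f p.1 p.2) (nz _ hfd)
  obtain ⟨hK1, e, he, heb⟩ := ht_spec (fun p : Fin N × Fin N => σ p.1 p.2) (nz _ hσ.1.ne_zero)
  change 1 ≤ matHeight σ at hK1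
  change ∀ p : Fin N × Fin N, IB (matHeight σ) (e * σ p.1 p.2) at heb
  set H := projHeight fun p : Fin N × Fin N => f p.1 p.2 with hHdef
  set K := matHeight σ with hKdef
  set G : Matrix (Fin N) (Fin N) ℚ := c • Matrix.of f with hGdef
  have hcf : ∀ i j, G i j = c * f i j := fun i j => by simp [hGdef]
  have hG : ∀ i j, G i j = G j i := fun i j => by rw [hcf, hcf, hf]
  have hGd : G.det ≠ 0 := by
    rw [hGdef, Matrix.det_smul]
    exact mul_ne_zero (pow_ne_zero _ hc) hfd
  have hGH : ∀ i j, IB H (G i j) := fun i j => by rw [hcf]; exact hcb (i, j)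
  have hbl : ∀ x y : Fin N → ℚ, bl G x y = c * ∑ i, ∑ j, f i j * x i * y j := by
    intro x y
    simp only [Matrix.toBilin'_apply, Finset.mul_sum, hcf]
    refine Finset.sum_congr rfl fun i _ => Finset.sum_congr rfl fun j _ => by ring
  have hσI : Iso G σ := by
    intro x y
    rw [hbl, hbl, hσ.2]
  obtain ⟨x, P, hx, -, hani, horth, -, -⟩ := hA H G hG hGd hGH
  obtain ⟨L, σ', hL, hprod, hσ', hfix, -, hLb⟩ := hB H K G x σ hG hGH
    (fun i hi a => (hx i hi a).mono (Nat.mul_le_mul_right _ (Nat.le_mul_of_pos_right _ N.factorial_pos)))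
    hani horth hσI
    ⟨e, he, (IB_scale hN0 (iso_det hGd hσI) (fun i j => heb (i, j))).mono
      (Nat.mul_le_mul_right _ (Nat.le_mul_of_pos_left _ hCA1)),
      fun i j => (heb (i, j)).mono (Nat.le_mul_of_pos_left _ hC01)⟩
  have hspan : Submodule.span ℚ (Set.range fun i : Fin N => x i) = ⊤ := by
    apply LinearIndependent.span_eq_top_of_card_eq_finrank'
    · refine LinearMap.BilinForm.linearIndependent_of_iIsOrtho (B := bl G) ?_ fun i => hani i i.2
      intro i j hij
      exact horth i i.2 j j.2 (fun h => hij (Fin.ext h))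
    · simp
  have hzero : ∀ z : Fin N → ℚ, (∀ i < N, bl G (x i) z = 0) → z = 0 := by
    intro z hz
    apply bl_nondeg hGd
    intro y
    have hy : y ∈ Submodule.span ℚ (Set.range fun i : Fin N => x i) := by rw [hspan]; trivial
    have : Submodule.span ℚ (Set.range fun i : Fin N => x i) ≤ LinearMap.ker (bl G z) := by
      rw [Submodule.span_le]
      rintro _ ⟨i, rfl⟩
      change bl G z (x i) = 0
      rw [bl_symm hG]; exact hz i i.2
    rw [bl_symm hG]
    exact this hy
  have hfixN : ∀ i < N, σ'.mulVec (x i) = x i ∨ σ'.mulVec (x i) = - x i := by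
    intro i hi
    by_cases hi' : i < N - 1
    · exact hfix i hi'
    set w := σ'.mulVec (x i) with hw
    have hii := hani i hi
    set t := bl G (x i) w / bl G (x i) (x i) with ht
    have hwt : w - t • x i = 0 := by
      apply hzero
      intro j hj
      rw [map_sub, map_smul, smul_eq_mul]
      by_cases hji : j = i
      · subst hji; rw [ht]; field_simp; ring
      · rw [horth j hj i hi hji]
        have h2 : bl G (σ'.mulVec (x j)) w = 0 := by
          rw [hw, hσ']; exact horth j hj i hi hji
        rcases hfix j (by omega) with h | h
        · rw [h] at h2; rw [h2]; ring
        · rw [h] at h2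
          have : bl G (x j) w = 0 := by simpa using h2
          rw [this]; ring
    have hwt' : w = t • x i := sub_eq_zero.1 hwt
    have hww : bl G w w = bl G (x i) (x i) := hσ' _ _
    rw [hwt'] at hww
    simp only [map_smul, LinearMap.smul_apply, smul_eq_mul] at hww
    have htt : t * t = 1 := by
      apply mul_right_cancel₀ hii
      linarith
    rw [hwt']
    rcases mul_self_eq_one_iff.1 htt with h | h
    · left; rw [h, one_smul]
    · right; rw [h, neg_one_smul]
  obtain ⟨M, ρ, hM, hprod', -, hρ, hMb⟩ := lemC hani horth σ' hfixN N le_rfl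
  have hρ1 : ρ = 1 := by
    apply Matrix.toLin'.injective
    apply LinearMap.ext_on_range hspan
    intro i
    simp [hρ i i.2]
  have hfin : σ = (L ++ M).prod := by
    rw [List.prod_append, hprod, hprod', hρ1, mul_one]
  have hall : ∀ τ ∈ L ++ M, IsReflection N f τ ∧ ((matHeight τ : ℕ) : ℝ) ≤
      CC * ((H : ℝ) ^ ((N : ℝ) / 3) * (K : ℝ)) ^ (5 ^ (N - 1)) := by
    have fin : ∀ (v : Fin N → ℚ) (C' a b : ℕ), C' ≤ CB + CA → bl G v v ≠ 0 →
        (∀ i, IB (C' * (H ^ a * K ^ b)) (v i)) → 3 * (1 + 2 * a) ≤ N * 5 ^ (N - 1) →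
        2 * b ≤ 5 ^ (N - 1) → IsReflection N f (rfm G v) ∧ ((matHeight (rfm G v) : ℕ) : ℝ) ≤
      CC * ((H : ℝ) ^ ((N : ℝ) / 3) * (K : ℝ)) ^ (5 ^ (N - 1)) := by
      intro v C' a b hC' hv0 hvb ha hb
      refine ⟨rfm_isReflection hc hcf hG v hv0, ?_⟩
      have h1 := rfm_height hGH hvb hv0
      have h2 : (N ^ 2 + 2 * N) * (H * (C' * (H ^ a * K ^ b)) ^ 2)
          ≤ CC * (H ^ (1 + 2 * a) * K ^ (2 * b)) := by
        calc _ = (N ^ 2 + 2 * N) * C' ^ 2 * (H ^ (1 + 2 * a) * K ^ (2 * b)) := by ring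
          _ ≤ _ := by
            apply Nat.mul_le_mul_right
            exact (Nat.mul_le_mul_left _ (Nat.pow_le_pow_left hC' 2)).trans (Nat.le_succ _)
      have h3 : ((matHeight (rfm G v) : ℕ) : ℝ) ≤ (CC : ℝ) * ((H ^ (1 + 2 * a) * K ^ (2 * b) : ℕ) : ℝ) := by
        exact_mod_cast h1.trans h2
      exact h3.trans (mul_le_mul_of_nonneg_left (pow_bound hH1 hK1 ha hb) (by positivity))
    intro τ hτ
    rcases List.mem_append.1 hτ with h | h
    · obtain ⟨i, hi, v, hv0, rfl, hvb⟩ := hLb τ h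
      exact fin v CB _ _ (by omega) hv0 hvb (exp1 hN hi).1 (exp1 hN hi).2
    · obtain ⟨i, hi, rfl⟩ := hMb τ h
      refine fin (x i) CA (ee i) 0 (by omega) (hani i hi) ?_ (exp2 hN hi) (by simp)
      intro a
      simpa using hx i hi a
  by_cases hnil : L ++ M = []
  · left
    rw [hfin, hnil, List.prod_nil]
  · right
    refine ⟨(L ++ M).length, List.length_pos_iff.2 hnil, ?_, (L ++ M).get, ?_, ?_, ?_⟩
    · rw [List.length_append]; omega
    · intro i; exact (hall _ (List.get_mem _ _)).1
    · rw [List.ofFn_get]; exact hfin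
    · intro i; exact (hall _ (List.get_mem _ _)).2
end

section
/- For every N ≥ 2 there is a constant C_N depending only on N with the following property. Let Q(X) = F(X) + L(X) + A be a quadratic polynomial in N variables with rational coefficients, where F is a nonzero quadratic form, L is a linear form, and A ∈ ℚ. If Q has a zero x ∈ ℚ^N, then there exists x ∈ ℚ^N with Q(x) = 0 and h(x) ≤ C_N · H(Q)^{(N+1)/2}. -/
/-- Inhomogeneous height `h(x) = H(1, x)` of a rational vector. -/
noncomputable def inhomHeight {N : ℕ} (x : Fin N → ℚ) : ℕ :=
  projHeight (Fin.cons 1 x)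

/-- Height of the quadratic polynomial `Q(X) = Σ f_{ij} X_i X_j + Σ l_i X_i + A`: the
homogeneous height of its coefficient vector. -/
noncomputable def quadPolyHeight {N : ℕ} (f : Fin N → Fin N → ℚ) (l : Fin N → ℚ) (A : ℚ) : ℕ :=
  projHeight (Sum.elim (fun p : Fin N × Fin N => f p.1 p.2) (Sum.elim l fun _ : Unit => A))


open Finset in
/-- bilinear form -/
def bf {n : ℕ} (g : Fin n → Fin n → ℤ) (x y : Fin n → ℤ) : ℤ := ∑ i, ∑ j, g i j * x i * y j

theorem bf_comm {n : ℕ} (g : Fin n → Fin n → ℤ) (hg : ∀ i j, g i j = g j i) (x y : Fin n → ℤ) :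
    bf g x y = bf g y x := by
  unfold bf
  rw [Finset.sum_comm]
  refine Finset.sum_congr rfl fun i _ => Finset.sum_congr rfl fun j _ => ?_
  rw [hg j i]; ring

theorem bf_comb {n : ℕ} (g : Fin n → Fin n → ℤ) (x y z : Fin n → ℤ) (s t : ℤ) :
    bf g (fun i => s * x i + t * y i) z = s * bf g x z + t * bf g y z := by
  unfold bf
  simp only [Finset.mul_sum, ← Finset.sum_add_distrib]
  refine Finset.sum_congr rfl fun i _ => Finset.sum_congr rfl fun j _ => ?_
  ring

theorem bf_comb_right {n : ℕ} (g : Fin n → Fin n → ℤ) (x y z : Fin n → ℤ) (s t : ℤ) :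
    bf g z (fun i => s * x i + t * y i) = s * bf g z x + t * bf g z y := by
  unfold bf
  simp only [Finset.mul_sum, ← Finset.sum_add_distrib]
  refine Finset.sum_congr rfl fun i _ => Finset.sum_congr rfl fun j _ => ?_
  ring

theorem bf_bound {n : ℕ} (g : Fin n → Fin n → ℤ) (x y : Fin n → ℤ) (H X Y : ℤ)
    (hg : ∀ i j, |g i j| ≤ H) (hx : ∀ i, |x i| ≤ X) (hy : ∀ i, |y i| ≤ Y)
    (hH : 0 ≤ H) (hX : 0 ≤ X) :
    |bf g x y| ≤ n ^ 2 * (H * X * Y) := by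
  unfold bf
  calc |∑ i, ∑ j, g i j * x i * y j| ≤ ∑ i, ∑ j, |g i j * x i * y j| := by
        refine (Finset.abs_sum_le_sum_abs _ _).trans (Finset.sum_le_sum fun i _ => ?_)
        exact Finset.abs_sum_le_sum_abs _ _
    _ ≤ ∑ _i : Fin n, ∑ _j : Fin n, H * X * Y := by
        refine Finset.sum_le_sum fun i _ => Finset.sum_le_sum fun j _ => ?_
        rw [abs_mul, abs_mul]
        exact mul_le_mul (mul_le_mul (hg i j) (hx i) (abs_nonneg _) hH) (hy j) (abs_nonneg _)
          (mul_nonneg hH hX)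
    _ = _ := by simp; ring

/-- sup norm -/
def sz {n : ℕ} (x : Fin n → ℤ) : ℕ := Finset.univ.sup fun i => (x i).natAbs

theorem abs_le_sz {n : ℕ} (x : Fin n → ℤ) (i : Fin n) : |x i| ≤ sz x := by
  have : (x i).natAbs ≤ sz x := Finset.le_sup (f := fun i => (x i).natAbs) (Finset.mem_univ i)
  rw [Int.abs_eq_natAbs]; exact_mod_cast this

theorem sz_lt {n : ℕ} (x : Fin n → ℤ) (M : ℕ) (hM : 0 < M) (h : ∀ i, |x i| < M) : sz x < M := by
  unfold sz
  rw [Finset.sup_lt_iff (by simpa using hM)]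
  intro i _
  have := h i
  rw [Int.abs_eq_natAbs] at this
  exact_mod_cast this

theorem exists_sz {n : ℕ} (x : Fin n → ℤ) (h : 0 < sz x) : ∃ i, |x i| = sz x := by
  have hne : (Finset.univ : Finset (Fin n)).Nonempty := by
    by_contra hc
    rw [Finset.not_nonempty_iff_eq_empty] at hc
    simp [sz, hc] at h
  obtain ⟨i, _, hi⟩ := Finset.exists_mem_eq_sup Finset.univ hne (fun i => (x i).natAbs)
  refine ⟨i, ?_⟩
  unfold sz; rw [hi]; simp

/-- simultaneous approximation -/
theorem dirichlet {m : ℕ} (a : Fin (m+1) → ℤ) (hM : 0 < sz a) (K : ℕ) (hK : 0 < K) :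
    ∃ (q : ℤ) (x : Fin (m+1) → ℤ), 1 ≤ q ∧ q ≤ (K:ℤ) ^ m ∧
      ∀ i, |(sz a : ℤ) * x i - q * a i| * K < sz a := by
  obtain ⟨i0, hi0⟩ := exists_sz a hM
  set M : ℤ := ((sz a : ℕ) : ℤ) with hMdef
  have hMp : 0 < M := by omega
  have hKp : (0:ℤ) < K := by exact_mod_cast hK
  let box : ℕ → Fin m → Fin K := fun q j =>
    ⟨((((q:ℤ) * a (i0.succAbove j)) % M * K) / M).toNat, by
      have h1 := Int.emod_nonneg ((q:ℤ) * a (i0.succAbove j)) hMp.ne'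
      have h2 := Int.emod_lt_of_pos ((q:ℤ) * a (i0.succAbove j)) hMp
      have : (((q:ℤ) * a (i0.succAbove j)) % M * K) / M < K := by
        apply Int.ediv_lt_of_lt_mul hMp
        nlinarith
      omega⟩
  obtain ⟨q1, hq1, q2, hq2, hne, heq⟩ := Finset.exists_ne_map_eq_of_card_lt_of_maps_to
    (s := Finset.range (K ^ m + 1)) (t := (Finset.univ : Finset (Fin m → Fin K)))
    (by simp) (f := box) (fun _ _ => by simp)
  wlog hlt : q1 < q2 generalizing q1 q2
  · exact this q2 hq2 q1 hq1 hne.symm heq.symm (by omega)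
  refine ⟨(q2:ℤ) - q1, fun i => ((q2:ℤ) * a i) / M - ((q1:ℤ) * a i) / M, by omega, ?_, ?_⟩
  · simp only [Finset.mem_range] at hq2
    have : (q2:ℤ) ≤ ((K^m : ℕ):ℤ) := by exact_mod_cast Nat.lt_succ_iff.mp hq2
    push_cast at this
    omega
  · intro i
    have e1 := Int.emod_add_mul_ediv ((q1:ℤ) * a i) M
    have e2 := Int.emod_add_mul_ediv ((q2:ℤ) * a i) M
    have key : M * (((q2:ℤ) * a i) / M - ((q1:ℤ) * a i) / M) - ((q2:ℤ) - q1) * a i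
        = ((q1:ℤ) * a i) % M - ((q2:ℤ) * a i) % M := by linarith
    rw [key]
    rcases eq_or_ne i i0 with rfl | hi
    · have hd : M ∣ a i := by rw [← hi0]; exact (abs_dvd _ _).mpr dvd_rfl
      rw [Int.emod_eq_zero_of_dvd (hd.mul_left _), Int.emod_eq_zero_of_dvd (hd.mul_left _)]
      simpa using hMp
    · obtain ⟨j, rfl⟩ := Fin.exists_succAbove_eq hi
      have hb := congrArg Fin.val (congrFun heq j)
      simp only [box] at hb
      set r1 := ((q1:ℤ) * a (i0.succAbove j)) % M
      set r2 := ((q2:ℤ) * a (i0.succAbove j)) % M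
      have p1 : 0 ≤ r1 * K / M := Int.ediv_nonneg (mul_nonneg (Int.emod_nonneg _ hMp.ne') hKp.le) hMp.le
      have p2 : 0 ≤ r2 * K / M := Int.ediv_nonneg (mul_nonneg (Int.emod_nonneg _ hMp.ne') hKp.le) hMp.le
      have hb' : r1 * K / M = r2 * K / M := by omega
      have f1 := Int.emod_add_mul_ediv (r1 * K) M
      have f2 := Int.emod_add_mul_ediv (r2 * K) M
      have g1 := Int.emod_nonneg (r1 * K) hMp.ne'
      have g2 := Int.emod_nonneg (r2 * K) hMp.ne'
      have k1 := Int.emod_lt_of_pos (r1 * K) hMp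
      have k2 := Int.emod_lt_of_pos (r2 * K) hMp
      rw [hb'] at f1
      have hab : |r1 - r2| * K = |(r1 - r2) * K| := by rw [abs_mul, abs_of_pos hKp]
      rw [hab, abs_lt]
      constructor <;> linarith

theorem descent {m : ℕ} (g : Fin (m+1) → Fin (m+1) → ℤ) (hg : ∀ i j, g i j = g j i)
    (H : ℤ) (hH : 0 ≤ H) (hgH : ∀ i j, |g i j| ≤ H) (W : AddSubgroup (Fin (m+1) → ℤ))
    (hW : ∀ x ∈ W, bf g x x = 0 → ∀ z, bf g x z = 0)
    (K : ℕ) (hK : 0 < K) (hKH : 3 * ((m+1:ℕ):ℤ) ^ 2 * H < (K:ℤ) ^ 2)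
    (a : Fin (m+1) → ℤ) (ha : bf g a a = 0) (haW : a ∉ W) (hbig : K ^ m < sz a) :
    ∃ b, bf g b b = 0 ∧ b ∉ W ∧ sz b < sz a := by
  have hM0 : 0 < sz a := by omega
  obtain ⟨q, x, hq1, hq2, hE⟩ := dirichlet a hM0 K hK
  have hsz := abs_le_sz a
  have hbig' : (K:ℤ) ^ m < sz a := by exact_mod_cast hbig
  have hlt := fun b h => sz_lt (n := m+1) b (sz a) hM0 h
  set M : ℤ := ((sz a : ℕ) : ℤ) with hMdef
  have hMp : 0 < M := by omega
  have hKp : (1:ℤ) ≤ K := by exact_mod_cast hK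
  set E : Fin (m+1) → ℤ := fun i => M * x i - q * a i with hEdef
  have hE' : ∀ i, |E i| * K < M := hE
  have hE1 : ∀ i, |E i| < M := fun i => by
    have := hE' i; have := abs_nonneg (E i); nlinarith
  have hEx : E = fun i => M * x i + (-q) * a i := by funext i; simp [hEdef]; ring
  have hxa : bf g x a = bf g a x := bf_comm g hg x a
  have hEE : bf g E E = M^2 * bf g x x - 2 * M * q * bf g x a := by
    rw [hEx, bf_comb, bf_comb_right, bf_comb_right, ha, hxa]; ring
  have hEa : bf g E a = M * bf g x a := by
    rw [hEx, bf_comb, ha]; ring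
  -- bounds
  have bEE : |bf g E E| * K^2 ≤ ((m+1:ℕ):ℤ)^2 * H * M^2 := by
    have h := bf_bound g (fun i => K * E i + 0 * E i) (fun i => K * E i + 0 * E i) H M M hgH
      (fun i => by rw [zero_mul, add_zero, abs_mul, abs_of_pos (by omega : (0:ℤ) < K)]; linarith [hE' i])
      (fun i => by rw [zero_mul, add_zero, abs_mul, abs_of_pos (by omega : (0:ℤ) < K)]; linarith [hE' i])
      hH hMp.le
    rw [bf_comb, bf_comb_right] at h
    have e : (K:ℤ) * (K * bf g E E + 0 * bf g E E) + 0 * (K * bf g E E + 0 * bf g E E)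
      = bf g E E * K^2 := by ring
    rw [e, abs_mul, abs_of_nonneg (by positivity : (0:ℤ) ≤ (K:ℤ)^2)] at h
    linarith
  have bEa : |bf g E a| * K ≤ ((m+1:ℕ):ℤ)^2 * H * M^2 := by
    have h := bf_bound g (fun i => K * E i + 0 * E i) a H M M hgH
      (fun i => by rw [zero_mul, add_zero, abs_mul, abs_of_pos (by omega : (0:ℤ) < K)]; linarith [hE' i])
      hsz hH hMp.le
    rw [bf_comb] at h
    have e : (K:ℤ) * bf g E a + 0 * bf g E a = bf g E a * K := by ring
    rw [e, abs_mul, abs_of_pos (by omega : (0:ℤ) < K)] at h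
    linarith
  have hn2 : (0:ℤ) ≤ ((m+1:ℕ):ℤ)^2 * H := by positivity
  by_cases hx : bf g x x = 0
  · by_cases hxW : x ∈ W
    · have hr := hW x hxW hx
      refine ⟨fun i => 1 * a i + (-1) * x i, ?_, ?_, hlt _ fun i => ?_⟩
      · rw [bf_comb, bf_comb_right, ha, ← hxa, hr, hr]; ring
      · intro hc
        apply haW
        have := W.add_mem hc hxW
        convert this using 1
        funext i; simp
      · have h1 : M * (1 * a i + (-1) * x i) = (M - q) * a i - E i := by simp [hEdef]; ring
        have h2 : M * |1 * a i + (-1) * x i| < M * M := by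
          rw [← abs_of_pos hMp, ← abs_mul, abs_of_pos hMp, h1]
          refine (abs_sub _ _).trans_lt ?_
          rw [abs_mul, abs_of_pos (by omega : 0 < M - q)]
          nlinarith [hE1 i, hsz i]
        exact lt_of_mul_lt_mul_left h2 hMp.le
    · refine ⟨x, hx, hxW, hlt _ fun i => ?_⟩
      have h1 : M * x i = q * a i + E i := by simp [hEdef]
      have h2 : M * |x i| < M * (q + 1) := by
        rw [← abs_of_pos hMp, ← abs_mul, abs_of_pos hMp, h1]
        refine (abs_add_le _ _).trans_lt ?_
        rw [abs_mul, abs_of_pos (by omega : 0 < q)]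
        nlinarith [hE1 i, hsz i]
      have := lt_of_mul_lt_mul_left h2 hMp.le
      omega
  · by_cases har : ∀ z, bf g a z = 0
    · exfalso
      rw [hxa, har x] at hEE
      have h1 : 1 ≤ |bf g x x| := Int.one_le_abs hx
      have h2 : |bf g E E| = M^2 * |bf g x x| := by
        rw [hEE, mul_zero, sub_zero, abs_mul, abs_of_nonneg (by positivity : 0 ≤ M^2)]
      rw [h2] at bEE
      have h3 : M^2 * K^2 ≤ M^2 * |bf g x x| * K^2 := by
        have : M^2 * 1 ≤ M^2 * |bf g x x| := by gcongr
        have hk : (0:ℤ) ≤ K^2 := by positivity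
        nlinarith
      have h4 : 0 < M^2 := by positivity
      nlinarith
    · have hra : bf g (fun i => bf g x x * a i + (-2 * bf g x a) * x i)
          (fun i => bf g x x * a i + (-2 * bf g x a) * x i) = 0 := by
        rw [bf_comb, bf_comb_right, bf_comb_right, ha, hxa]; ring
      refine ⟨fun i => bf g x x * a i + (-2 * bf g x a) * x i, hra, ?_, hlt _ fun i => ?_⟩
      · intro hc
        have hr := hW _ hc hra
        apply har
        have h1 := hr x
        rw [bf_comb, ← hxa] at h1
        have h2 : bf g x x * bf g x a = 0 := by linarith
        have h3 : bf g x a = 0 := by simpa [hx] using h2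
        intro z
        have h4 := hr z
        rw [bf_comb, h3] at h4
        simpa [hx] using h4
      · have h1 : M^2 * (bf g x x * a i + (-2 * bf g x a) * x i)
            = bf g E E * a i - 2 * bf g E a * E i := by
          rw [hEE, hEa]; simp only [hEdef]; ring
        have hKK : (0:ℤ) < M^2 * K^2 := by positivity
        have h2 : (M^2 * K^2) * |bf g x x * a i + (-2 * bf g x a) * x i| < (M^2 * K^2) * M := by
          have e1 : (M^2 * K^2) * |bf g x x * a i + (-2 * bf g x a) * x i|
              = |bf g E E * a i - 2 * bf g E a * E i| * K^2 := by
            rw [← h1, abs_mul, abs_of_nonneg (by positivity : 0 ≤ M^2)]; ring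
          rw [e1]
          have t := abs_sub (bf g E E * a i) (2 * bf g E a * E i)
          rw [abs_mul, abs_mul, abs_mul, abs_two] at t
          have t1 : |bf g E E| * |a i| * K^2 ≤ ((m+1:ℕ):ℤ)^2 * H * M^2 * M := by
            have := mul_le_mul bEE (hsz i) (abs_nonneg _) (by positivity)
            linarith
          have t2 : |bf g E a| * |E i| * K^2 ≤ ((m+1:ℕ):ℤ)^2 * H * M^2 * M := by
            have := mul_le_mul bEa (hE' i).le (by positivity) (by positivity)
            linarith
          have t3 : |bf g E E * a i - 2 * bf g E a * E i| * K^2 ≤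
            (|bf g E E| * |a i| + 2 * |bf g E a| * |E i|) * K^2 := by gcongr
          have t4 : 0 < M^2 * M := by positivity
          nlinarith
        exact lt_of_mul_lt_mul_left h2 hKK.le

theorem cassels {m : ℕ} (g : Fin (m+1) → Fin (m+1) → ℤ) (hg : ∀ i j, g i j = g j i)
    (H : ℤ) (hH : 0 ≤ H) (hgH : ∀ i j, |g i j| ≤ H) (W : AddSubgroup (Fin (m+1) → ℤ))
    (hW : ∀ x ∈ W, bf g x x = 0 → ∀ z, bf g x z = 0)
    (K : ℕ) (hK : 0 < K) (hKH : 3 * ((m+1:ℕ):ℤ) ^ 2 * H < (K:ℤ) ^ 2)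
    (a : Fin (m+1) → ℤ) (ha : bf g a a = 0) (haW : a ∉ W) :
    ∃ b, bf g b b = 0 ∧ b ∉ W ∧ sz b ≤ K ^ m := by
  induction hs : sz a using Nat.strong_induction_on generalizing a with
  | _ s ih =>
    by_cases hb : sz a ≤ K ^ m
    · exact ⟨a, ha, haW, hb⟩
    · obtain ⟨b, h1, h2, h3⟩ := descent g hg H hH hgH W hW K hK hKH a ha haW (by omega)
      exact ih _ (hs ▸ h3) b h1 h2 rfl

theorem exists_K (n H : ℕ) (hn : 1 ≤ n) (hH : 1 ≤ H) : ∃ K : ℕ, 0 < K ∧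
    3 * (n:ℤ) ^ 2 * (H:ℤ) < (K:ℤ) ^ 2 ∧
    ∀ m : ℕ, ((K ^ m : ℕ) : ℝ) ≤ (3 * n : ℝ) ^ m * (H:ℝ) ^ ((m:ℝ) / 2) := by
  refine ⟨Nat.sqrt (3 * n ^ 2 * H) + 1, by omega, ?_, ?_⟩
  · have := Nat.lt_succ_sqrt' (3 * n ^ 2 * H)
    exact_mod_cast this
  · intro m
    have hs : (1:ℝ) ≤ Real.sqrt H := by
      rw [Real.one_le_sqrt]; exact_mod_cast hH
    have hn' : (1:ℝ) ≤ n := by exact_mod_cast hn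
    have hsq : Real.sqrt H ^ 2 = H := Real.sq_sqrt (by positivity)
    have h1 : ((Nat.sqrt (3 * n ^ 2 * H) : ℕ) : ℝ) ≤ 2 * n * Real.sqrt H := by
      refine (Real.nat_sqrt_le_real_sqrt).trans ?_
      rw [Real.sqrt_le_left (by positivity)]
      push_cast
      rw [mul_pow, mul_pow, hsq]
      have : (0:ℝ) ≤ (n:ℝ)^2 * H := by positivity
      nlinarith
    have h2 : ((Nat.sqrt (3 * n ^ 2 * H) + 1 : ℕ) : ℝ) ≤ 3 * n * Real.sqrt H := by
      push_cast
      nlinarith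
    have h3 : (H:ℝ) ^ ((m:ℝ) / 2) = Real.sqrt H ^ m := by
      rw [Real.sqrt_eq_rpow, ← Real.rpow_natCast, ← Real.rpow_mul (by positivity)]
      congr 1; ring
    rw [h3, ← mul_pow, Nat.cast_pow]
    gcongr

/-- homogenised form (times two) -/
def hom {N : ℕ} (f : Fin N → Fin N → ℤ) (l : Fin N → ℤ) (A : ℤ) :
    Fin (N+1) → Fin (N+1) → ℤ := fun i j =>
  Fin.cases (Fin.cases (2 * A) l j) (fun i' => Fin.cases (l i') (fun j' => 2 * f i' j') j) i

theorem bf_hom {N : ℕ} (f : Fin N → Fin N → ℤ) (l : Fin N → ℤ) (A : ℤ) (x y : Fin (N+1) → ℤ) :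
    bf (hom f l A) x y = 2 * A * x 0 * y 0 + x 0 * ∑ i, l i * y i.succ + y 0 * ∑ i, l i * x i.succ
      + 2 * bf f (fun i => x i.succ) (fun i => y i.succ) := by
  unfold bf hom
  simp only [Fin.sum_univ_succ, Fin.cases_zero, Fin.cases_succ, Finset.sum_add_distrib,
    Finset.mul_sum]
  have e1 : ∑ i, l i * x 0 * y i.succ = ∑ i, x 0 * (l i * y i.succ) :=
    Finset.sum_congr rfl fun i _ => by ring
  have e2 : ∑ i, l i * x i.succ * y 0 = ∑ i, y 0 * (l i * x i.succ) :=
    Finset.sum_congr rfl fun i _ => by ring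
  have e3 : ∑ i, ∑ j, 2 * f i j * x i.succ * y j.succ
      = ∑ i, ∑ j, 2 * (f i j * x i.succ * y j.succ) :=
    Finset.sum_congr rfl fun i _ => Finset.sum_congr rfl fun j _ => by ring
  rw [e1, e2, e3]; ring

theorem lin_bound {N : ℕ} (l x : Fin N → ℤ) (H X : ℤ) (hl : ∀ i, |l i| ≤ H)
    (hx : ∀ i, |x i| ≤ X) (hH : 0 ≤ H) : |∑ i, l i * x i| ≤ N * (H * X) := by
  calc |∑ i, l i * x i| ≤ ∑ i, |l i * x i| := Finset.abs_sum_le_sum_abs _ _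
    _ ≤ ∑ _i : Fin N, H * X := by
        refine Finset.sum_le_sum fun i _ => ?_
        rw [abs_mul]
        exact mul_le_mul (hl i) (hx i) (abs_nonneg _) hH
    _ = _ := by simp

theorem lin_comb {N : ℕ} (l x y : Fin N → ℤ) (s t : ℤ) :
    ∑ i, l i * (s * x i + t * y i) = s * ∑ i, l i * x i + t * ∑ i, l i * y i := by
  simp only [Finset.mul_sum, ← Finset.sum_add_distrib]
  exact Finset.sum_congr rfl fun i _ => by ring

theorem bf_single {n : ℕ} (g : Fin n → Fin n → ℤ) (x z : Fin n → ℤ)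
    (h : ∀ i, bf g x (Pi.single i 1) = 0) : bf g x z = 0 := by
  have e : ∀ i, bf g x (Pi.single i 1) = ∑ k, g k i * x k := by
    intro i
    unfold bf
    refine Finset.sum_congr rfl fun k _ => ?_
    rw [Finset.sum_eq_single i]
    · simp
    · intro b _ hb; simp [hb]
    · simp
  unfold bf
  rw [Finset.sum_comm]
  refine Finset.sum_eq_zero fun j _ => ?_
  rw [← Finset.sum_mul, ← e, h, zero_mul]

theorem int_version (m : ℕ) : ∃ C : ℝ, 0 < C ∧
    ∀ (f : Fin (m+1) → Fin (m+1) → ℤ) (l : Fin (m+1) → ℤ) (A : ℤ) (H : ℕ), 1 ≤ H →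
      (∀ i j, f i j = f j i) → (∀ i j, |f i j| ≤ H) → (∀ i, |l i| ≤ H) → |A| ≤ H →
      (∃ (d : ℤ) (w : Fin (m+1) → ℤ), d ≠ 0 ∧ bf f w w + d * ∑ i, l i * w i + d^2 * A = 0) →
      ∃ (d : ℤ) (w : Fin (m+1) → ℤ), d ≠ 0 ∧ bf f w w + d * ∑ i, l i * w i + d^2 * A = 0 ∧
        (((|d| : ℤ) : ℝ) ≤ C * (H:ℝ) ^ (((m+1:ℕ):ℝ) / 2 + 1 / 2)) ∧
        ∀ i, (((|w i| : ℤ) : ℝ) ≤ C * (H:ℝ) ^ (((m+1:ℕ):ℝ) / 2 + 1 / 2)) := by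
  set n : ℕ := m + 1 with hn
  have hn1 : (1:ℤ) ≤ n := by omega
  refine ⟨6 * n ^ 2 * (3 * n : ℝ) ^ m + (3 * (n + 1 : ℕ) : ℝ) ^ n * 2 ^ ((n:ℝ)/2), by positivity, ?_⟩
  intro f l A H hH hf hfH hlH hAH ⟨d, w, hd, hw⟩
  have hH' : (1:ℝ) ≤ H := by exact_mod_cast hH
  have hHZ : (1:ℤ) ≤ H := by exact_mod_cast hH
  by_cases hinf : ∃ a : Fin (m+1) → ℤ, bf f a a = 0 ∧
      ¬ ((∀ z, bf f a z = 0) ∧ ∑ i, l i * a i = 0)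
  · obtain ⟨a, ha, hag⟩ := hinf
    let W : AddSubgroup (Fin (m+1) → ℤ) :=
      { carrier := {a | (∀ z, bf f a z = 0) ∧ ∑ i, l i * a i = 0}
        zero_mem' := by simp [bf]
        add_mem' := by
          rintro x y ⟨h1, h2⟩ ⟨h3, h4⟩
          have e : x + y = fun i => 1 * x i + 1 * y i := by funext i; simp
          refine ⟨fun z => ?_, ?_⟩
          · rw [e, bf_comb, h1, h3]; simp
          · rw [e, lin_comb, h2, h4]; simp
        neg_mem' := by
          rintro x ⟨h1, h2⟩
          have e : -x = fun i => (-1) * x i + 0 * x i := by funext i; simp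
          refine ⟨fun z => ?_, ?_⟩
          · rw [e, bf_comb, h1]; simp
          · rw [e, lin_comb, h2]; simp }
    obtain ⟨K, hK0, hK1, hK2⟩ := exists_K n H (by omega) hH
    obtain ⟨b, hb1, hb2, hb3⟩ := cassels f hf H (by omega) hfH W (fun x hx _ => hx.1) K hK0 hK1 a ha hag
    -- choose y
    have hy : ∃ y : Fin (m+1) → ℤ, (∀ i, |y i| ≤ 1) ∧ 2 * bf f b y + ∑ i, l i * b i ≠ 0 := by
      by_cases hl : ∑ i, l i * b i = 0
      · by_contra hc
        push Not at hc
        apply hb2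
        refine ⟨fun z => bf_single f b z fun i => ?_, hl⟩
        have := hc (Pi.single i 1) (fun j => by
          by_cases h : j = i
          · subst h; simp
          · simp [h])
        omega
      · exact ⟨0, by simp, by simpa [bf] using hl⟩
    obtain ⟨y, hy1, hD⟩ := hy
    set D := 2 * bf f b y + ∑ i, l i * b i with hDdef
    set q := bf f y y + ∑ i, l i * y i + A with hq
    have hs := abs_le_sz b
    have hs0 : (0:ℤ) ≤ sz b := by omega
    have hs1 : (1:ℤ) ≤ sz b := by
      by_contra hc
      apply hb2
      have : b = 0 := by
        funext i
        have := hs i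
        exact abs_nonpos_iff.mp (by omega)
      rw [this]; exact W.zero_mem
    have hP : (1:ℤ) ≤ H * sz b := by nlinarith
    have bD : |D| ≤ 3 * n^2 * (H * sz b) := by
      have h1 := bf_bound f b y H (sz b) 1 hfH hs hy1 (by omega) hs0
      have h2 := lin_bound l b H (sz b) hlH hs (by omega)
      have h3 := abs_add_le (2 * bf f b y) (∑ i, l i * b i)
      rw [abs_mul, abs_two] at h3
      have : (n:ℤ) * (H * sz b) ≤ n^2 * (H * sz b) := by
        have : (n:ℤ) ≤ n^2 := by nlinarith
        gcongr
      rw [mul_one] at h1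
      linarith
    have bq : |q| ≤ 3 * n^2 * H := by
      have h1 := bf_bound f y y H 1 1 hfH hy1 hy1 (by omega) (by norm_num)
      have h2 := lin_bound l y H 1 hlH hy1 (by omega)
      have h3 := abs_add_three (bf f y y) (∑ i, l i * y i) A
      simp only [mul_one] at h1 h2
      have : (n:ℤ) * H ≤ n^2 * H := by
        have : (n:ℤ) ≤ n^2 := by nlinarith
        gcongr
      have : (H:ℤ) ≤ n * H := by nlinarith
      linarith
    have key : (((6 * n^2 * (H * sz b) : ℤ)) : ℝ) ≤
        (6 * n ^ 2 * (3 * n : ℝ) ^ m + (3 * (n + 1 : ℕ) : ℝ) ^ n * 2 ^ ((n:ℝ)/2)) *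
          (H:ℝ) ^ ((n:ℝ) / 2 + 1 / 2) := by
      have e : (H:ℝ) ^ ((n:ℝ) / 2 + 1 / 2) = H * (H:ℝ) ^ ((m:ℝ) / 2) := by
        nth_rewrite 2 [← Real.rpow_one (H:ℝ)]
        rw [← Real.rpow_add (by linarith)]
        congr 1; rw [hn]; push_cast; ring
      have h1 : (sz b : ℝ) ≤ (3 * n : ℝ) ^ m * (H:ℝ) ^ ((m:ℝ) / 2) :=
        le_trans (by exact_mod_cast hb3) (hK2 m)
      rw [add_mul]
      refine le_add_of_le_of_nonneg ?_ (by positivity)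
      rw [e]; push_cast
      calc (6 * (n:ℝ)^2 * (H * sz b)) ≤ 6 * n^2 * (H * ((3 * n : ℝ) ^ m * (H:ℝ) ^ ((m:ℝ) / 2))) := by
            gcongr
        _ = _ := by ring
    refine ⟨D, fun i => D * y i + (-q) * b i, hD, ?_, ?_, fun i => ?_⟩
    · rw [bf_comb, bf_comb_right, bf_comb_right, hb1, lin_comb, bf_comm f hf y b]
      rw [hq]
      linear_combination (-D * q) * hDdef + D^2 * hq
    · refine le_trans ?_ key
      exact_mod_cast (by nlinarith : |D| ≤ 6 * n^2 * (H * sz b))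
    · refine le_trans ?_ key
      have : |D * y i + (-q) * b i| ≤ 6 * n^2 * (H * sz b) := by
        refine (abs_add_le _ _).trans ?_
        rw [abs_mul, abs_mul, abs_neg]
        have h1 := mul_le_mul bD (hy1 i) (abs_nonneg _) (by positivity)
        have h2 := mul_le_mul bq (hs i) (abs_nonneg _) (by positivity)
        linarith
      exact_mod_cast this
  · push Not at hinf
    let W : AddSubgroup (Fin (n+1) → ℤ) :=
      { carrier := {a | a 0 = 0}
        zero_mem' := by simp
        add_mem' := by
          intro x y h1 h2
          simp only [Set.mem_ofPred_eq, Pi.add_apply] at *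
          omega
        neg_mem' := by
          intro x h1
          simp only [Set.mem_ofPred_eq, Pi.neg_apply] at *
          omega }
    obtain ⟨K, hK0, hK1, hK2⟩ := exists_K (n+1) (2*H) (by omega) (by omega)
    have hsym : ∀ i j, hom f l A i j = hom f l A j i := by
      intro i j
      refine Fin.cases ?_ (fun i => ?_) i <;> refine Fin.cases ?_ (fun j => ?_) j <;> simp [hom, hf]
    have hbd : ∀ i j, |hom f l A i j| ≤ ((2 * H : ℕ) : ℤ) := by
      intro i j
      push_cast
      refine Fin.cases ?_ (fun i => ?_) i <;> refine Fin.cases ?_ (fun j => ?_) j <;>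
        simp only [hom, Fin.cases_zero, Fin.cases_succ, abs_mul, abs_two]
      · linarith
      · linarith [hlH j]
      · linarith [hlH i]
      · linarith [hfH i j]
    obtain ⟨b, hb1, hb2, hb3⟩ := cassels (hom f l A) hsym ((2*H:ℕ):ℤ) (by omega) hbd W
      (by
        intro x hx h0 z
        have hx0 : x 0 = 0 := hx
        rw [bf_hom, hx0] at h0
        have := hinf (fun i => x i.succ) (by linarith)
        rw [bf_hom, hx0, this.1, this.2]
        ring) K hK0 hK1 (Fin.cons d w : Fin (n+1) → ℤ)
      (by
        rw [bf_hom]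
        simp only [Fin.cons_zero, Fin.cons_succ]
        linarith)
      (by
        intro hc
        exact hd (by simpa using (show (Fin.cons d w : Fin (n+1) → ℤ) 0 = 0 from hc)))
    have key : ∀ i, (((|b i| : ℤ)) : ℝ) ≤
        (6 * n ^ 2 * (3 * n : ℝ) ^ m + (3 * (n + 1 : ℕ) : ℝ) ^ n * 2 ^ ((n:ℝ)/2)) *
          (H:ℝ) ^ ((n:ℝ) / 2 + 1 / 2) := by
      intro i
      have h0 : ((|b i| : ℤ) : ℝ) ≤ sz b := by exact_mod_cast abs_le_sz b i
      have h1 : (sz b : ℝ) ≤ ((K ^ n : ℕ) : ℝ) := by exact_mod_cast hb3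
      refine h0.trans (h1.trans ((hK2 n).trans ?_))
      rw [add_mul]
      refine le_add_of_nonneg_of_le (by positivity) ?_
      rw [mul_assoc]
      have e : ((2 * H : ℕ) : ℝ) ^ ((n:ℝ)/2) = 2 ^ ((n:ℝ)/2) * (H:ℝ) ^ ((n:ℝ)/2) := by
        push_cast
        rw [Real.mul_rpow (by norm_num) (by positivity)]
      rw [e]
      have e2 : (H:ℝ) ^ ((n:ℝ)/2) ≤ (H:ℝ) ^ ((n:ℝ)/2 + 1/2) :=
        Real.rpow_le_rpow_of_exponent_le hH' (by linarith)
      gcongr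
    refine ⟨b 0, fun i => b i.succ, hb2, ?_, key 0, fun i => key i.succ⟩
    rw [bf_hom] at hb1
    linarith

theorem height_aux {ι : Type*} [Fintype ι] (x : ι → ℚ) (z : ι → ℤ) (c : ℚ) (hc : c ≠ 0)
    (hz : ∀ i, (z i : ℚ) = c * x i) (i0 : ι) (hi0 : z i0 ≠ 0) :
    ∃ y : ι → ℤ, (∃ c : ℚ, c ≠ 0 ∧ ∀ i, (y i : ℚ) = c * x i) ∧
      Finset.univ.gcd y = 1 ∧ ∀ i, (y i).natAbs ≤ (z i).natAbs := by
  obtain ⟨y, hy, hg⟩ := Finset.extract_gcd z (s := Finset.univ) ⟨i0, Finset.mem_univ _⟩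
  set G := Finset.univ.gcd z
  have hG : G ≠ 0 := fun h => hi0 (by rw [hy i0 (Finset.mem_univ _), h, zero_mul])
  have hG' : (G:ℚ) ≠ 0 := by exact_mod_cast hG
  refine ⟨y, ⟨c / G, div_ne_zero hc hG', fun i => ?_⟩, hg, fun i => ?_⟩
  · rw [div_mul_eq_mul_div, ← hz, hy i (Finset.mem_univ _)]
    push_cast; field_simp
  · rw [hy i (Finset.mem_univ _), Int.natAbs_mul]
    exact Nat.le_mul_of_pos_left _ (Int.natAbs_pos.mpr hG)

theorem height_le {ι : Type*} [Fintype ι] (x : ι → ℚ) (z : ι → ℤ) (c : ℚ) (hc : c ≠ 0)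
    (hz : ∀ i, (z i : ℚ) = c * x i) (i0 : ι) (hi0 : z i0 ≠ 0) :
    ∃ i, projHeight x ≤ (z i).natAbs := by
  obtain ⟨y, h1, h2, h3⟩ := height_aux x z c hc hz i0 hi0
  obtain ⟨i, _, hi⟩ := Finset.exists_mem_eq_sup Finset.univ ⟨i0, Finset.mem_univ _⟩
    (fun i => (y i).natAbs)
  refine ⟨i, le_trans (Nat.sInf_le ⟨y, h1, h2, rfl⟩) ?_⟩
  rw [hi]; exact h3 i

theorem clear_denoms {ι : Type*} [Fintype ι] (x : ι → ℚ) :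
    ∃ (z : ι → ℤ) (c : ℤ), c ≠ 0 ∧ ∀ i, (z i : ℚ) = c * x i := by
  obtain ⟨c, hc⟩ := IsLocalization.exist_integer_multiples_of_finite (nonZeroDivisors ℤ) x
  choose z hz using hc
  refine ⟨z, c, nonZeroDivisors.coe_ne_zero c, fun i => ?_⟩
  have := hz i
  simpa [Submonoid.smul_def] using this

theorem height_attained {ι : Type*} [Fintype ι] (x : ι → ℚ) (i0 : ι) (hx : x i0 ≠ 0) :
    ∃ (y : ι → ℤ) (c : ℚ), c ≠ 0 ∧ (∀ i, (y i : ℚ) = c * x i) ∧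
      ∀ i, |y i| ≤ projHeight x := by
  obtain ⟨z, c, hc, hz⟩ := clear_denoms x
  have hc' : (c:ℚ) ≠ 0 := by exact_mod_cast hc
  have hz0 : z i0 ≠ 0 := by
    intro h
    have := hz i0
    rw [h] at this
    simp [hc, hx] at this
  obtain ⟨y, h1, h2, -⟩ := height_aux x z c hc' hz i0 hz0
  obtain ⟨y, ⟨c, hc, hy⟩, -, h⟩ := Nat.sInf_mem (s := {m : ℕ | ∃ y : ι → ℤ,
    (∃ c : ℚ, c ≠ 0 ∧ ∀ i, (y i : ℚ) = c * x i) ∧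
    Finset.univ.gcd y = 1 ∧ m = Finset.univ.sup fun i => (y i).natAbs}) ⟨_, y, h1, h2, rfl⟩
  refine ⟨y, c, hc, hy, fun i => ?_⟩
  have h4 : (y i).natAbs ≤ projHeight x := by
    unfold projHeight
    rw [h]
    exact Finset.le_sup (f := fun i => (y i).natAbs) (Finset.mem_univ i)
  rw [Int.abs_eq_natAbs]; exact_mod_cast h4

/-- **Masser: "How to solve a quadratic equation in rationals".** For every `N ≥ 2` there is a
constant `C_N` such that every quadratic polynomial `Q = F + L + A` over ℚ in `N` variables with
nonzero quadratic part `F`, which has a rational zero, has a rational zero `x` with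
`h(x) ≤ C_N · H(Q)^((N+1)/2)`. -/
theorem masser_rational_zeros (N : ℕ) (hN : 2 ≤ N) :
    ∃ C : ℝ, 0 < C ∧
      ∀ (f : Fin N → Fin N → ℚ) (l : Fin N → ℚ) (A : ℚ),
      (∀ i j, f i j = f j i) → f ≠ 0 →
      (∃ x : Fin N → ℚ, ∑ i, ∑ j, f i j * x i * x j + ∑ i, l i * x i + A = 0) →
      ∃ x : Fin N → ℚ, (∑ i, ∑ j, f i j * x i * x j + ∑ i, l i * x i + A = 0) ∧
        ((inhomHeight x : ℕ) : ℝ) ≤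
          C * ((quadPolyHeight f l A : ℕ) : ℝ) ^ (((N : ℝ) + 1) / 2) := by
  obtain ⟨m, rfl⟩ : ∃ m, N = m + 1 := ⟨N - 1, by omega⟩
  obtain ⟨C, hC, hmain⟩ := int_version m
  refine ⟨C, hC, ?_⟩
  rintro f l A hf hf0 ⟨x, hx⟩
  obtain ⟨i0, j0, hij⟩ : ∃ i j, f i j ≠ 0 := by
    by_contra hc
    push Not at hc
    exact hf0 (by funext i j; simpa using hc i j)
  obtain ⟨y, c, hc, hy, hyH⟩ := height_attained
    (Sum.elim (fun p : Fin (m+1) × Fin (m+1) => f p.1 p.2) (Sum.elim l fun _ : Unit => A))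
    (Sum.inl (i0, j0)) (by simpa using hij)
  change ∀ i, |y i| ≤ ((quadPolyHeight f l A : ℕ) : ℤ) at hyH
  set H := quadPolyHeight f l A
  have hyf : ∀ i j, (y (Sum.inl (i, j)) : ℚ) = c * f i j := fun i j => hy _
  have hyl : ∀ i, (y (Sum.inr (Sum.inl i)) : ℚ) = c * l i := fun i => hy _
  have hyA : (y (Sum.inr (Sum.inr ())) : ℚ) = c * A := hy _
  have hH : 1 ≤ H := by
    have h1 := hyH (Sum.inl (i0, j0))
    have h2 : y (Sum.inl (i0, j0)) ≠ 0 := by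
      intro h
      have := hyf i0 j0
      rw [h] at this
      simp [hc, hij] at this
    have := Int.one_le_abs h2
    omega
  have trans : ∀ (d : ℤ) (w : Fin (m+1) → ℤ) (u : Fin (m+1) → ℚ), d ≠ 0 →
      (∀ i, (w i : ℚ) = d * u i) →
      (bf (fun i j => y (Sum.inl (i, j))) w w + d * ∑ i, y (Sum.inr (Sum.inl i)) * w i
        + d^2 * y (Sum.inr (Sum.inr ())) = 0 ↔
      ∑ i, ∑ j, f i j * u i * u j + ∑ i, l i * u i + A = 0) := by
    intro d w u hd hw
    have hd' : (d:ℚ) ≠ 0 := by exact_mod_cast hd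
    have e : ((bf (fun i j => y (Sum.inl (i, j))) w w + d * ∑ i, y (Sum.inr (Sum.inl i)) * w i
        + d^2 * y (Sum.inr (Sum.inr ())) : ℤ) : ℚ)
        = (c * d^2) * (∑ i, ∑ j, f i j * u i * u j + ∑ i, l i * u i + A) := by
      unfold bf
      push_cast
      simp only [hyf, hyl, hyA, hw, mul_add, Finset.mul_sum]
      congr 1
      · congr 1
        · exact Finset.sum_congr rfl fun i _ => Finset.sum_congr rfl fun j _ => by ring
        · exact Finset.sum_congr rfl fun i _ => by ring
      · ring
    rw [← Int.cast_inj (α := ℚ), e, Int.cast_zero]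
    simp [hc, hd']
  obtain ⟨z, k, hk, hz⟩ := clear_denoms x
  obtain ⟨d, w, hd, hw, hdC, hwC⟩ := hmain (fun i j => y (Sum.inl (i, j)))
    (fun i => y (Sum.inr (Sum.inl i))) (y (Sum.inr (Sum.inr ()))) H hH
    (fun i j => by
      have : (y (Sum.inl (i, j)) : ℚ) = y (Sum.inl (j, i)) := by rw [hyf, hyf, hf]
      exact_mod_cast this)
    (fun i j => hyH _) (fun i => hyH _) (hyH _)
    ⟨k, z, hk, (trans k z x hk hz).mpr hx⟩
  have hd' : (d:ℚ) ≠ 0 := by exact_mod_cast hd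
  have hwu : ∀ i, (w i : ℚ) = d * ((w i : ℚ) / d) := fun i => by field_simp
  refine ⟨fun i => (w i : ℚ) / d, (trans d w _ hd hwu).mp hw, ?_⟩
  have hexp : (((m + 1 : ℕ) : ℝ) + 1) / 2 = ((m+1:ℕ):ℝ) / 2 + 1 / 2 := by ring
  rw [hexp]
  obtain ⟨i, hi⟩ := height_le (Fin.cons 1 (fun i => (w i : ℚ) / d) : Fin (m+1+1) → ℚ)
    (Fin.cons d w : Fin (m+1+1) → ℤ) d hd'
    (fun i => by
      refine Fin.cases ?_ (fun i => ?_) i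
      · simp
      · simpa using hwu i) 0 (by simpa using hd)
  change inhomHeight _ ≤ _ at hi
  have hi' : ((inhomHeight (fun i => (w i : ℚ) / d) : ℕ) : ℝ) ≤
      ((|(Fin.cons d w : Fin (m+1+1) → ℤ) i| : ℤ) : ℝ) := by
    rw [Int.abs_eq_natAbs]
    exact_mod_cast hi
  refine hi'.trans ?_
  refine Fin.cases ?_ (fun i => ?_) i
  · simpa using hdC
  · simpa using hwC i
end
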